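/- arXiv:2402.09487 — 2 statements merged into one kernel-verified Lean document; each statement's English description precedes it below -/
import Mathlib

section
/- The j-invariant of an elliptic curve with complex multiplication by an order in an imaginary quadratic field is an algebraic integer. -/
noncomputable section

/-- The lattice `ℤω₁ + ℤω₂ ⊆ ℂ`. -/
def latticeOf (ω₁ ω₂ : ℂ) : AddSubgroup ℂ := AddSubgroup.closure {ω₁, ω₂}

/-- `ω₁, ω₂` form a basis of a lattice in `ℂ` (they are ℝ-linearly independent). -/
def IsLatticeBasis (ω₁ ω₂ : ℂ) : Prop := ω₁ ≠ 0 ∧ (ω₂ / ω₁).im ≠ 0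

/-- Weight `2k`-type Eisenstein series of a lattice. -/
def eisenstein (Λ : AddSubgroup ℂ) (k : ℕ) : ℂ :=
  ∑' w : {w : Λ // (w : ℂ) ≠ 0}, ((w : ℂ)) ^ (-(k : ℤ))

def latG₂ (Λ : AddSubgroup ℂ) : ℂ := 60 * eisenstein Λ 4
def latG₃ (Λ : AddSubgroup ℂ) : ℂ := 140 * eisenstein Λ 6

/-- The `j`-invariant of the complex elliptic curve `ℂ/Λ`. -/
def latticeJ (Λ : AddSubgroup ℂ) : ℂ :=
  1728 * latG₂ Λ ^ 3 / (latG₂ Λ ^ 3 - 27 * latG₃ Λ ^ 2)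

/-- `ℂ/Λ` has complex multiplication: its multiplier ring is strictly larger than `ℤ`. -/
def HasCM (Λ : AddSubgroup ℂ) : Prop :=
  ∃ α : ℂ, α ∉ Set.range ((↑) : ℤ → ℂ) ∧ ∀ z ∈ Λ, α * z ∈ Λ

section

open UpperHalfPlane ModularForm EisensteinSeries PowerSeries
open scoped MatrixGroups Real Manifold

local notation "𝕢" => Function.Periodic.qParam

lemma mem_latticeOf {ω₁ ω₂ z : ℂ} :
    z ∈ latticeOf ω₁ ω₂ ↔ ∃ a b : ℤ, z = a * ω₁ + b * ω₂ := by
  simp only [latticeOf, AddSubgroup.mem_closure_pair, zsmul_eq_mul, eq_comm]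

/-- The lattice sum of weight `k` is the full Eisenstein sum of `ω₂ / ω₁`, up to scaling. -/
lemma eisenstein_latticeOf {ω₁ ω₂ : ℂ} (τ : ℍ) (h₁ : ω₁ ≠ 0) (hτ : ω₂ = τ * ω₁) {k : ℕ}
    (hk : k ≠ 0) :
    eisenstein (latticeOf ω₁ ω₂) k = (ω₁ ^ k)⁻¹ * ∑' v : Fin 2 → ℤ, eisSummand k v τ := by
  let e : (Fin 2 → ℤ) → latticeOf ω₁ ω₂ := fun v ↦
    ⟨(v 0 * τ + v 1) * ω₁, mem_latticeOf.2 ⟨v 1, v 0, by rw [hτ]; ring⟩⟩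
  have he : Function.Bijective e := by
    constructor
    · intro v w hvw
      have h : ((v 0 : ℂ) * τ + v 1) * ω₁ = (w 0 * τ + w 1) * ω₁ := congrArg Subtype.val hvw
      have h := mul_right_cancel₀ h₁ h
      have him := congrArg Complex.im h
      have h0 : v 0 = w 0 := by
        simpa [τ.im_ne_zero] using him
      have h1' : v 1 = w 1 := by
        rw [h0] at h
        exact_mod_cast add_left_cancel h
      ext i
      fin_cases i
      · exact h0
      · exact h1'
    · rintro ⟨z, hz⟩
      obtain ⟨a, b, rfl⟩ := mem_latticeOf.1 hz
      exact ⟨![b, a], Subtype.ext (by simp [e, hτ]; ring)⟩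
  have hsub : eisenstein (latticeOf ω₁ ω₂) k =
      ∑' w : latticeOf ω₁ ω₂, (w : ℂ) ^ (-(k : ℤ)) := by
    refine tsum_subtype_eq_of_support_subset
      (f := fun w : latticeOf ω₁ ω₂ ↦ (w : ℂ) ^ (-(k : ℤ)))
      (s := {w : latticeOf ω₁ ω₂ | (w : ℂ) ≠ 0}) ?_
    intro w hw
    by_contra hw0
    have hw0' : (w : ℂ) = 0 := not_not.1 hw0
    exact hw (by simp [hw0', hk])
  rw [hsub, ← (Equiv.ofBijective e he).tsum_eq, ← tsum_mul_left]
  refine tsum_congr fun v ↦ ?_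
  simp [e, eisSummand, mul_pow, mul_comm]

/-- The `j`-invariant as a function on the upper half-plane. -/
def jFun (τ : ℍ) : ℂ := E₄ τ ^ 3 / discriminant τ

lemma latticeJ_latticeOf {ω₁ ω₂ : ℂ} (τ : ℍ) (h₁ : ω₁ ≠ 0) (hτ : ω₂ = τ * ω₁) :
    latticeJ (latticeOf ω₁ ω₂) = jFun τ := by
  have hE {k : ℕ} (hk : 3 ≤ k) : ∑' v : Fin 2 → ℤ, eisSummand k v τ =
      2 * riemannZeta k * E hk τ := by
    rw [tsum_eisSummand_eq_riemannZeta_mul_eisensteinSeries hk]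
    have : E hk τ = (1 / 2 : ℂ) * eisensteinSeries (N := 1) 0 k τ := rfl
    rw [this]; ring
  have h4 : riemannZeta 4 = π ^ 4 / 90 := riemannZeta_four
  have h6 : riemannZeta 6 = π ^ 6 / 945 := by
    have := riemannZeta_two_mul_nat (k := 3) (by norm_num)
    have hb : bernoulli 6 = 1 / 42 := by
      decide +kernel
    norm_num [hb, Nat.factorial] at this
    rw [this]; ring
  have hπ : (π : ℂ) ≠ 0 := by exact_mod_cast Real.pi_ne_zero
  have hΔ := discriminant_ne_zero τ
  have hΔ' := discriminant_eq_E₄_cube_sub_E₆_sq τ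
  have hne : E₄ τ ^ 3 - E₆ τ ^ 2 ≠ 0 := fun h ↦ hΔ (by rw [hΔ', h, zero_div])
  have e4 := hE (k := 4) (by norm_num)
  have e6 := hE (k := 6) (by norm_num)
  push_cast at e4 e6
  rw [h4] at e4
  rw [h6] at e6
  rw [jFun, hΔ', latticeJ, latG₂, latG₃, eisenstein_latticeOf τ h₁ hτ (by norm_num),
    eisenstein_latticeOf τ h₁ hτ (by norm_num)]
  push_cast
  rw [e4, e6]
  have hden : (60 * ((ω₁ ^ 4)⁻¹ * (2 * (π ^ 4 / 90) * E₄ τ))) ^ 3 -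
      27 * (140 * ((ω₁ ^ 6)⁻¹ * (2 * (π ^ 6 / 945) * E₆ τ))) ^ 2 =
      64 * π ^ 12 / (27 * ω₁ ^ 12) * (E₄ τ ^ 3 - E₆ τ ^ 2) := by
    field_simp; ring
  have hnum : 1728 * (60 * ((ω₁ ^ 4)⁻¹ * (2 * (π ^ 4 / 90) * E₄ τ))) ^ 3 =
      64 * π ^ 12 / (27 * ω₁ ^ 12) * (1728 * E₄ τ ^ 3) := by
    field_simp; ring
  rw [hden, hnum, mul_div_mul_left]
  · field_simp
  · exact div_ne_zero (by simp [hπ]) (by simp [h₁])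

/-- A complex lattice with complex multiplication is fixed by an integer matrix of positive
nonsquare determinant. -/
lemma exists_fixing_matrix {ω₁ ω₂ : ℂ} (τ : ℍ) (h₁ : ω₁ ≠ 0) (hτ : ω₂ = τ * ω₁)
    (hcm : HasCM (latticeOf ω₁ ω₂)) :
    ∃ a b c d : ℤ, 0 < a * d - b * c ∧ ¬ IsSquare (a * d - b * c) ∧
      (a * τ + b : ℂ) = (c * τ + d) * τ := by
  obtain ⟨α, hα, hmul⟩ := hcm
  obtain ⟨d, c, hdc⟩ := mem_latticeOf.1 (hmul ω₁ (mem_latticeOf.2 ⟨1, 0, by simp⟩))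
  obtain ⟨b, a, hba⟩ := mem_latticeOf.1 (hmul ω₂ (mem_latticeOf.2 ⟨0, 1, by simp⟩))
  have hα' : α = c * τ + d := by
    apply mul_right_cancel₀ h₁
    rw [hdc, hτ]; ring
  have hfix : (a * τ + b : ℂ) = (c * τ + d) * τ := by
    apply mul_right_cancel₀ h₁
    rw [← hα']
    linear_combination -hba + (α - a) * hτ
  have hc : c ≠ 0 := by
    rintro rfl
    exact hα ⟨d, by simp [hα']⟩
  have hdisc : (d - a) ^ 2 + 4 * b * c < 0 := by
    have hre := congrArg Complex.re hfix
    have him := congrArg Complex.im hfix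
    simp at hre him
    have hy := τ.im_pos
    have him' : (a : ℝ) = 2 * c * τ.re + d := by
      apply mul_right_cancel₀ hy.ne'
      linear_combination him
    have hc' : (c : ℝ) ^ 2 > 0 := by positivity
    have key : ((d - a : ℝ)) ^ 2 + 4 * b * c = -(4 * c ^ 2 * τ.im ^ 2) := by
      have hb : (b : ℝ) = c * (τ.re ^ 2 - τ.im ^ 2) + d * τ.re - a * τ.re := by
        linear_combination hre
      rw [hb, him']; ring
    have : ((d - a : ℝ)) ^ 2 + 4 * b * c < 0 := by
      rw [key]
      have : 0 < 4 * (c : ℝ) ^ 2 * τ.im ^ 2 := by positivity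
      linarith
    exact_mod_cast this
  set D : ℤ := -((d - a) ^ 2 + 4 * b * c) with hD
  have hDpos : 0 < D := by rw [hD]; linarith
  obtain ⟨n, hn⟩ : ∃ n : ℤ, D < 2 * n + a + d := ⟨D + |a + d|, by
    have := neg_abs_le (a + d); have := abs_nonneg (a + d); linarith⟩
  have hdet : 4 * ((a + n) * (d + n) - b * c) = (2 * n + a + d) ^ 2 + D := by rw [hD]; ring
  refine ⟨a + n, b, c, d + n, by nlinarith, ?_, by push_cast; linear_combination hfix⟩
  rintro ⟨s, hs⟩
  rw [hs] at hdet
  have h2s : (2 * |s|) ^ 2 = (2 * n + a + d) ^ 2 + D := by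
    rw [← hdet, mul_pow, sq_abs]; ring
  have hs0 := abs_nonneg s
  have : 2 * n + a + d < 2 * |s| := by nlinarith
  nlinarith

section

open scoped ArithmeticFunction.sigma

/-- The generating series `∑ σₖ(n) qⁿ`. -/
def sigmaSeries (k : ℕ) : ℤ⟦X⟧ := .mk fun n ↦ (σ k n : ℤ)

lemma qExpansion_E₄ :
    qExpansion 1 E₄ = PowerSeries.map (Int.castRingHom ℂ) (1 + 240 * sigmaSeries 3) := by
  ext n
  have hb : bernoulli 4 = -1 / 30 := by decide +kernel
  rw [show (240 : ℤ⟦X⟧) = C 240 from rfl, E_qExpansion_coeff _ (by decide),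
    coeff_map, map_add, coeff_C_mul]
  rcases eq_or_ne n 0 with rfl | hn
  · simp [sigmaSeries]
  · simp [sigmaSeries, hn, hb, coeff_one]
    norm_num

lemma qExpansion_E₆ :
    qExpansion 1 E₆ = PowerSeries.map (Int.castRingHom ℂ) (1 - 504 * sigmaSeries 5) := by
  ext n
  have hb : bernoulli 6 = 1 / 42 := by decide +kernel
  rw [show (504 : ℤ⟦X⟧) = C 504 from rfl, E_qExpansion_coeff _ (by decide),
    coeff_map, map_sub, coeff_C_mul]
  rcases eq_or_ne n 0 with rfl | hn
  · simp [sigmaSeries]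
  · simp [sigmaSeries, hn, hb, coeff_one]
    norm_num

lemma twelve_dvd_sigma (n : ℕ) : (12 : ℤ) ∣ 5 * (σ 3 n : ℤ) + 7 * (σ 5 n : ℤ) := by
  simp only [ArithmeticFunction.sigma_apply, Nat.cast_sum, Finset.mul_sum,
    ← Finset.sum_add_distrib]
  refine Finset.dvd_sum fun d _ ↦ ?_
  have h : ∀ x : ZMod 12, 5 * x ^ 3 + 7 * x ^ 5 = 0 := by decide
  refine (ZMod.intCast_zmod_eq_zero_iff_dvd _ 12).1 ?_
  push_cast
  exact h d

lemma exists_sigmaSeries_eq :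
    ∃ W : ℤ⟦X⟧, 5 * sigmaSeries 3 + 7 * sigmaSeries 5 = 12 * W := by
  choose w hw using twelve_dvd_sigma
  refine ⟨.mk w, ?_⟩
  rw [show (5 : ℤ⟦X⟧) = C 5 from rfl, show (7 : ℤ⟦X⟧) = C 7 from rfl,
    show (12 : ℤ⟦X⟧) = C 12 from rfl]
  ext n
  rw [map_add, coeff_C_mul, coeff_C_mul, coeff_C_mul]
  simp [sigmaSeries, hw]

/-- The discriminant has an integral `q`-expansion. -/
lemma exists_qExpansion_discriminant : ∃ D : ℤ⟦X⟧,
    qExpansion 1 discriminant = PowerSeries.map (Int.castRingHom ℂ) D := by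
  obtain ⟨W, hW⟩ := exists_sigmaSeries_eq
  set s := sigmaSeries 3
  set t := sigmaSeries 5
  refine ⟨100 * s ^ 2 + 8000 * s ^ 3 - 147 * t ^ 2 + W, ?_⟩
  have hfun : (1728 : ℂ) • (CuspForm.discriminant : ℍ → ℂ) = ⇑(E₄.pow 3) - ⇑(E₆.pow 2) := by
    ext z
    simp only [Pi.smul_apply, CuspForm.coe_discriminant, discriminant_eq_E₄_cube_sub_E₆_sq z,
      smul_eq_mul, Pi.sub_apply, ModularForm.coe_pow, Pi.pow_apply]
    ring
  have h := congrArg (qExpansion 1) hfun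
  rw [ModularForm.qExpansion_smul one_pos one_mem_strictPeriods_SL,
    ModularForm.qExpansion_sub one_pos one_mem_strictPeriods_SL,
    ModularForm.qExpansion_pow one_pos one_mem_strictPeriods_SL,
    ModularForm.qExpansion_pow one_pos one_mem_strictPeriods_SL, qExpansion_E₄, qExpansion_E₆,
    ← map_pow, ← map_pow, ← map_sub] at h
  have hint : (1 + 240 * s) ^ 3 - (1 - 504 * t) ^ 2 =
      C 1728 * (100 * s ^ 2 + 8000 * s ^ 3 - 147 * t ^ 2 + W) := by
    rw [show (C 1728 : ℤ⟦X⟧) = 1728 from rfl]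
    linear_combination 144 * hW
  rw [hint, map_mul, PowerSeries.map_C] at h
  have h' := congrArg ((1728 : ℂ)⁻¹ • ·) h
  simp only [smul_smul] at h'
  rw [CuspForm.coe_discriminant] at h'
  ext n
  have h'' := congrArg (coeff n) h'
  simpa using h''

end

/-- The ring of algebraic integers in `ℂ`. -/
abbrev AlgInt : Type := integralClosure ℤ ℂ

/-- The value of the power series `F` with algebraic integer coefficients at `q` is `v`. -/
def HasValueAt (F : AlgInt⟦X⟧) (q v : ℂ) : Prop :=
  HasSum (fun n ↦ ((coeff n F : AlgInt) : ℂ) * q ^ n) v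

namespace HasValueAt

variable {F G : AlgInt⟦X⟧} {q v w : ℂ}

lemma sub (hF : HasValueAt F q v) (hG : HasValueAt G q w) : HasValueAt (F - G) q (v - w) := by
  simpa [HasValueAt, sub_mul] using HasSum.sub hF hG

lemma mul (hF : HasValueAt F q v) (hG : HasValueAt G q w) : HasValueAt (F * G) q (v * w) := by
  have hF' := Summable.norm (HasSum.summable hF)
  have hG' := Summable.norm (HasSum.summable hG)
  have key (n : ℕ) : ((coeff n (F * G) : AlgInt) : ℂ) * q ^ n = ∑ kl ∈ Finset.HasAntidiagonal.antidiagonal n,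
      (((coeff kl.1 F : AlgInt) : ℂ) * q ^ kl.1) * (((coeff kl.2 G : AlgInt) : ℂ) * q ^ kl.2) := by
    rw [coeff_mul, AddSubmonoidClass.coe_finsetSum, Finset.sum_mul]
    refine Finset.sum_congr rfl fun kl hkl ↦ ?_
    rw [← Finset.HasAntidiagonal.mem_antidiagonal.1 hkl, pow_add]
    push_cast
    ring
  unfold HasValueAt
  simp_rw [key]
  rw [← hF.tsum_eq, ← hG.tsum_eq, tsum_mul_tsum_eq_tsum_sum_antidiagonal_of_summable_norm hF' hG']
  exact (summable_norm_sum_mul_antidiagonal_of_summable_norm hF' hG').of_norm.hasSum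

lemma C (a : AlgInt) (q : ℂ) : HasValueAt (PowerSeries.C a) q a := by
  have := hasSum_single (f := fun n ↦ ((coeff n (PowerSeries.C a) : AlgInt) : ℂ) * q ^ n) 0
    (fun n hn ↦ by simp [coeff_C, hn])
  simpa [HasValueAt] using this

lemma one (q : ℂ) : HasValueAt 1 q 1 := by simpa using C 1 q

lemma pow (hF : HasValueAt F q v) (n : ℕ) : HasValueAt (F ^ n) q (v ^ n) := by
  induction n with
  | zero => simpa using one q
  | succ n ih => simpa [pow_succ] using ih.mul hF

lemma prod {ι : Type*} {s : Finset ι} {F : ι → AlgInt⟦X⟧} {v : ι → ℂ}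
    (h : ∀ i ∈ s, HasValueAt (F i) q (v i)) :
    HasValueAt (∏ i ∈ s, F i) q (∏ i ∈ s, v i) := by
  classical
  induction s using Finset.induction_on with
  | empty => simpa using one q
  | insert i s hi ih =>
    rw [Finset.prod_insert hi, Finset.prod_insert hi]
    exact (h i (by simp)).mul (ih fun j hj ↦ h j (by simp [hj]))

end HasValueAt

/-- The power series `F(ζ Xᵏ)`. -/
def twist (k : ℕ) (ζ : AlgInt) (F : ℤ⟦X⟧) : AlgInt⟦X⟧ :=
  .mk fun n ↦ if k ∣ n then ζ ^ (n / k) * (coeff (n / k) F : ℤ) else 0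

lemma HasValueAt.twist {k : ℕ} (hk : 0 < k) (ζ : AlgInt) {F : ℤ⟦X⟧} {q v : ℂ}
    (h : HasSum (fun n ↦ ((coeff n F : ℤ) : ℂ) * (ζ * q ^ k) ^ n) v) :
    HasValueAt (twist k ζ F) q v := by
  have hinj : Function.Injective (fun n : ℕ ↦ k * n) := fun _ _ h ↦ Nat.eq_of_mul_eq_mul_left hk h
  refine (hinj.hasSum_iff ?_).1 (h.congr_fun ?_)
  · intro n hn
    have : ¬ k ∣ n := fun ⟨c, hc⟩ ↦ hn ⟨c, hc.symm⟩
    simp [_root_.twist, this]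
  · intro n
    simp [_root_.twist, hk, mul_pow, pow_mul]
    ring

/-- The lowest nonzero coefficient of the power series is a unit. -/
def UnitLead (F : AlgInt⟦X⟧) (n : ℕ) : Prop :=
  ∃ U : AlgInt⟦X⟧, IsUnit U ∧ F = X ^ n * U

lemma UnitLead.mul {F G : AlgInt⟦X⟧} {m n : ℕ} (hF : UnitLead F m) (hG : UnitLead G n) :
    UnitLead (F * G) (m + n) := by
  obtain ⟨U, hU, rfl⟩ := hF
  obtain ⟨V, hV, rfl⟩ := hG
  exact ⟨U * V, hU.mul hV, by ring⟩

lemma UnitLead.exists_prod {ι : Type*} {s : Finset ι} {F : ι → AlgInt⟦X⟧}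
    (h : ∀ i ∈ s, ∃ n, UnitLead (F i) n) : ∃ n, UnitLead (∏ i ∈ s, F i) n := by
  classical
  induction s using Finset.induction_on with
  | empty => exact ⟨0, 1, isUnit_one, by simp⟩
  | insert i s hi ih =>
    rw [Finset.prod_insert hi]
    obtain ⟨m, hm⟩ := h i (by simp)
    obtain ⟨n, hn⟩ := ih fun j hj ↦ h j (by simp [hj])
    exact ⟨_, hm.mul hn⟩

lemma UnitLead.sub_of_lt {F G : AlgInt⟦X⟧} {m n : ℕ} (hF : UnitLead F m) (hG : UnitLead G n)
    (hmn : m < n) : UnitLead (F - G) m := by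
  obtain ⟨U, hU, rfl⟩ := hF
  obtain ⟨V, hV, rfl⟩ := hG
  obtain ⟨k, rfl⟩ := Nat.exists_eq_add_of_lt hmn
  refine ⟨U - X ^ (k + 1) * V, ?_, by ring⟩
  rw [isUnit_iff_constantCoeff] at hU ⊢
  simpa using hU

lemma UnitLead.neg {F : AlgInt⟦X⟧} {n : ℕ} (hF : UnitLead F n) : UnitLead (-F) n := by
  obtain ⟨U, hU, rfl⟩ := hF
  exact ⟨-U, hU.neg, by ring⟩

lemma UnitLead.sub_of_ne {F G : AlgInt⟦X⟧} {m n : ℕ} (hF : UnitLead F m) (hG : UnitLead G n)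
    (hmn : m ≠ n) : ∃ k, UnitLead (F - G) k := by
  rcases hmn.lt_or_gt with h | h
  · exact ⟨m, hF.sub_of_lt hG h⟩
  · exact ⟨n, by simpa using (hG.sub_of_lt hF h).neg⟩

lemma UnitLead.pow {F : AlgInt⟦X⟧} {n : ℕ} (hF : UnitLead F n) (k : ℕ) :
    UnitLead (F ^ k) (k * n) := by
  obtain ⟨U, hU, rfl⟩ := hF
  exact ⟨U ^ k, hU.pow k, by ring⟩

lemma unitLead_of_coeff {F : AlgInt⟦X⟧} {n : ℕ} (h0 : ∀ i < n, coeff i F = 0)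
    (hn : IsUnit (coeff n F)) : UnitLead F n := by
  obtain ⟨U, rfl⟩ := X_pow_dvd_iff.2 h0
  refine ⟨U, isUnit_iff_constantCoeff.2 ?_, rfl⟩
  simpa [coeff_X_pow_mul'] using hn

lemma unitLead_twist_zero {k : ℕ} (ζ : AlgInt) {F : ℤ⟦X⟧}
    (hF : coeff 0 F = 1) : UnitLead (twist k ζ F) 0 := by
  apply unitLead_of_coeff (by simp)
  simp only [coeff_zero_eq_constantCoeff] at hF
  simp [twist, hF]

lemma unitLead_twist_one {k : ℕ} (hk : 0 < k) {ζ : AlgInt} (hζ : IsUnit ζ) {F : ℤ⟦X⟧}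
    (hF : coeff 0 F = 0) (hF1 : coeff 1 F = 1) : UnitLead (twist k ζ F) k := by
  apply unitLead_of_coeff
  · intro i hi
    simp only [twist, coeff_mk, ite_eq_right_iff]
    intro hdvd
    rw [Nat.eq_zero_of_dvd_of_lt hdvd hi, Nat.zero_div, hF]
    simp
  · simp [twist, hk, hF1, hζ]

/-- The function `f` on the upper half-plane is the sum of the power series `F` in
`exp (2πiτ / N)`. -/
def HasQExp (N : ℕ) (f : ℍ → ℂ) (F : AlgInt⟦X⟧) : Prop :=
  ∀ τ : ℍ, HasValueAt F (𝕢 N τ) (f τ)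

lemma exists_hasSum_E₄ : ∃ e : ℤ⟦X⟧, coeff 0 e = 1 ∧
    ∀ τ : ℍ, HasSum (fun n ↦ ((coeff n e : ℤ) : ℂ) * 𝕢 1 τ ^ n) (E₄ τ) := by
  refine ⟨1 + 240 * sigmaSeries 3, ?_, fun τ ↦ ?_⟩
  · simp [sigmaSeries]
  · have : Fact (IsCusp .infty 𝒮ℒ) :=
      ⟨Subgroup.isCusp_of_mem_strictPeriods one_pos one_mem_strictPeriods_SL⟩
    have h := ModularForm.hasSum_qExpansion E₄ one_pos one_mem_strictPeriods_SL τ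
    rw [qExpansion_E₄] at h
    simpa only [coeff_map, eq_intCast] using h

lemma exists_hasSum_discriminant : ∃ D : ℤ⟦X⟧, coeff 0 D = 0 ∧ coeff 1 D = 1 ∧
    ∀ τ : ℍ, HasSum (fun n ↦ ((coeff n D : ℤ) : ℂ) * 𝕢 1 τ ^ n) (discriminant τ) := by
  obtain ⟨D, hD⟩ := exists_qExpansion_discriminant
  refine ⟨D, ?_, ?_, fun τ ↦ ?_⟩
  · have h := CuspFormClass.qExpansion_coeff_zero CuspForm.discriminant one_pos
      one_mem_strictPeriods_SL
    rw [CuspForm.coe_discriminant, hD, coeff_map, eq_intCast] at h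
    exact_mod_cast h
  · have h := discriminant_qExpansion_coeff_one
    rw [hD, coeff_map, eq_intCast] at h
    exact_mod_cast h
  · have : Fact (IsCusp .infty 𝒮ℒ) :=
      ⟨Subgroup.isCusp_of_mem_strictPeriods one_pos one_mem_strictPeriods_SL⟩
    have h := ModularForm.hasSum_qExpansion CuspForm.discriminant one_pos
      one_mem_strictPeriods_SL τ
    rw [CuspForm.coe_discriminant, hD] at h
    simpa only [coeff_map, eq_intCast] using h

lemma HasQExp.of_hasSum {N k : ℕ} (hk : 0 < k) {ζ : AlgInt} {f : ℍ → ℂ} {F : ℤ⟦X⟧}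
    (hf : ∀ τ : ℍ, HasSum (fun n ↦ ((coeff n F : ℤ) : ℂ) * 𝕢 1 τ ^ n) (f τ))
    {g : ℍ → ℍ} (hg : ∀ τ : ℍ, 𝕢 1 (g τ) = ζ * 𝕢 N τ ^ k) :
    HasQExp N (f ∘ g) (twist k ζ F) := fun τ ↦ by
  have h := hf (g τ)
  rw [hg] at h
  exact HasValueAt.twist hk ζ h

lemma qParam_one_eq {N : ℕ} (hN : 0 < N) (z : ℂ) : 𝕢 1 z = 𝕢 N z ^ N := by
  have : (N : ℂ) ≠ 0 := by exact_mod_cast hN.ne'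
  rw [Function.Periodic.qParam, Function.Periodic.qParam, ← Complex.exp_nat_mul]
  congr 1
  push_cast
  field_simp

/-- Expansion in `exp (2πiτ / N)` of a function expanded in `exp (2πiτ)`. -/
lemma HasQExp.of_hasSum_id {N : ℕ} (hN : 0 < N) {f : ℍ → ℂ} {F : ℤ⟦X⟧}
    (hf : ∀ τ : ℍ, HasSum (fun n ↦ ((coeff n F : ℤ) : ℂ) * 𝕢 1 τ ^ n) (f τ)) :
    HasQExp N f (twist N 1 F) :=
  HasQExp.of_hasSum (g := id) hN hf fun τ ↦ by simp [qParam_one_eq hN]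

lemma natCast_mem_strictPeriods_SL (N : ℕ) : (N : ℝ) ∈ (𝒮ℒ).strictPeriods := by
  simpa using AddSubgroup.mem_zmultiples_iff.2 ⟨N, by simp⟩

lemma HasQExp.qExpansion_eq {N : ℕ} (hN : 0 < N) {k : ℤ} {f : ModularForm 𝒮ℒ k}
    {F : AlgInt⟦X⟧} (hf : HasQExp N f F) :
    qExpansion N f = PowerSeries.map (algebraMap AlgInt ℂ) F := by
  ext n
  rw [← ModularFormClass.qExpansion_coeff_unique (Nat.cast_pos.2 hN)
    (natCast_mem_strictPeriods_SL N) (f := f) hf n]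
  simp

lemma HasQExp.valueAtInfty_eq {N : ℕ} (hN : 0 < N) {k : ℤ} {f : ModularForm 𝒮ℒ k}
    {F : AlgInt⟦X⟧} (hf : HasQExp N f F) : valueAtInfty f = (constantCoeff F : AlgInt) := by
  have hN' : (0 : ℝ) < N := Nat.cast_pos.2 hN
  rw [← qExpansion_coeff_zero hN' (ModularFormClass.analyticAt_cuspFunction_zero f hN'
    (natCast_mem_strictPeriods_SL N)) (SlashInvariantFormClass.periodic_comp_ofComplex f
    (natCast_mem_strictPeriods_SL N)), hf.qExpansion_eq hN]
  simp

lemma map_algInt_injective :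
    Function.Injective (PowerSeries.map (algebraMap AlgInt ℂ)) := by
  intro F G h
  ext n
  have := congrArg (coeff n) h
  rwa [coeff_map, coeff_map] at this

/-- Division by a power series with unit leading coefficient preserves integrality of
coefficients. -/
lemma exists_eq_map_of_map_eq_mul {D F : AlgInt⟦X⟧} {n : ℕ} (hD : UnitLead D n) {g : ℂ⟦X⟧}
    (h : PowerSeries.map (algebraMap AlgInt ℂ) F = PowerSeries.map (algebraMap AlgInt ℂ) D * g) :
    ∃ G, g = PowerSeries.map (algebraMap AlgInt ℂ) G ∧ F = D * G := by
  obtain ⟨U, hU, rfl⟩ := hD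
  obtain ⟨V, hV⟩ := hU.exists_right_inv
  obtain ⟨H, rfl⟩ : X ^ n ∣ F := by
    rw [X_pow_dvd_iff]
    intro i hi
    rw [map_mul, map_pow, PowerSeries.map_X, mul_assoc] at h
    have := congrArg (coeff i) h
    rw [coeff_X_pow_mul', if_neg (by lia),
      coeff_map] at this
    exact Subtype.ext this
  refine ⟨V * H, ?_, by linear_combination -X ^ n * H * hV⟩
  rw [map_mul, map_mul, map_pow, PowerSeries.map_X, mul_assoc] at h
  have h' := mul_left_cancel₀ (pow_ne_zero n X_ne_zero) h
  have hV' := congrArg (PowerSeries.map (algebraMap AlgInt ℂ)) hV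
  rw [map_mul, map_one] at hV'
  rw [map_mul, h']
  linear_combination -g * hV'

/-- Division by the discriminant of a form vanishing at the cusp. -/
lemma HasQExp.exists_div_discriminant {N : ℕ} (hN : 0 < N) {k : ℕ}
    {f : ModularForm 𝒮ℒ (12 * (k + 1 : ℕ))} {F : AlgInt⟦X⟧} (hf : HasQExp N f F)
    (h0 : constantCoeff F = 0) :
    ∃ (g : ModularForm 𝒮ℒ (12 * k)) (D G : AlgInt⟦X⟧), HasQExp N g G ∧ UnitLead D N ∧
      F = D * G ∧ ∀ τ, f τ = discriminant τ * g τ := by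
  have hN' : (0 : ℝ) < N := Nat.cast_pos.2 hN
  obtain ⟨D, hD0, hD1, hD⟩ := exists_hasSum_discriminant
  have hcusp : (qExpansion 1 f).coeff 0 = 0 := by
    rw [qExpansion_coeff_zero one_pos (ModularFormClass.analyticAt_cuspFunction_zero f one_pos
      one_mem_strictPeriods_SL) (SlashInvariantFormClass.periodic_comp_ofComplex f
      one_mem_strictPeriods_SL), hf.valueAtInfty_eq hN, h0]
    rfl
  let g : ModularForm 𝒮ℒ (12 * k) :=
    ModularForm.mcast (by push_cast; ring) (CuspForm.discriminantEquiv (toCuspForm f hcusp))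
  have hfg (τ : ℍ) : f τ = discriminant τ * g τ :=
    (discriminant_mul_discriminantEquiv_apply (toCuspForm f hcusp) τ).symm
  have hΔ : HasQExp N (CuspForm.discriminant.toModularFormₗ) (twist N 1 D) :=
    HasQExp.of_hasSum_id hN hD
  have hmul : qExpansion N f = qExpansion N (CuspForm.discriminant.toModularFormₗ) *
      qExpansion N g := by
    rw [← ModularForm.qExpansion_mul_coe hN' (natCast_mem_strictPeriods_SL N)]
    congr 1
    ext τ
    exact hfg τ
  have hlead := unitLead_twist_one hN (ζ := 1) isUnit_one hD0 hD1
  rw [hf.qExpansion_eq hN, hΔ.qExpansion_eq hN] at hmul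
  obtain ⟨G, hG, hFG⟩ := exists_eq_map_of_map_eq_mul hlead hmul
  refine ⟨g, _, G, fun τ ↦ ?_, hlead, hFG, hfg⟩
  have : Fact (IsCusp .infty 𝒮ℒ) :=
    ⟨Subgroup.isCusp_of_mem_strictPeriods one_pos one_mem_strictPeriods_SL⟩
  have h := ModularForm.hasSum_qExpansion g hN' (natCast_mem_strictPeriods_SL N) τ
  rw [hG] at h
  exact h

/-- A level one form of weight `12k` with algebraic integer coefficients is `Δᵏ` times a polynomial
in `j` with algebraic integer coefficients. -/
lemma HasQExp.exists_polynomial {N : ℕ} (hN : 0 < N) (k : ℕ) :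
    ∀ {f : ModularForm 𝒮ℒ (12 * k)} {F : AlgInt⟦X⟧}, HasQExp N f F →
    ∃ P : Polynomial AlgInt, P.natDegree ≤ k ∧ P.coeff k = constantCoeff F ∧
      ∀ τ, f τ = discriminant τ ^ k * P.aeval (jFun τ) := by
  induction k with
  | zero =>
    intro f F hf
    obtain ⟨c, hc⟩ := ModularFormClass.levelOne_weight_zero_const (f.mcast (b := 0) (by simp))
    have hc' : (f : ℍ → ℂ) = Function.const ℍ c := hc
    have hv := hf.valueAtInfty_eq hN
    have hv' : valueAtInfty f = c := by
      rw [hc']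
      exact tendsto_const_nhds.limUnder_eq
    refine ⟨.C (constantCoeff F), by simp, by simp, fun τ ↦ ?_⟩
    simp only [pow_zero, one_mul, Polynomial.aeval_C]
    rw [hc']
    exact hv'.symm.trans hv
  | succ k ih =>
    intro f F hf
    obtain ⟨e, he0, he⟩ := exists_hasSum_E₄
    have hE : HasQExp N E₄ (twist N 1 e) := HasQExp.of_hasSum_id hN he
    have hEc : constantCoeff (twist N 1 e) = 1 := by
      simp only [coeff_zero_eq_constantCoeff] at he0
      simp [twist, he0]
    set a := constantCoeff F
    let f' : ModularForm 𝒮ℒ (12 * (k + 1 : ℕ)) :=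
      f - (a : ℂ) • ModularForm.mcast (by push_cast; ring) (E₄.pow (3 * (k + 1)))
    have hf'τ (τ : ℍ) : f' τ = f τ - a * E₄ τ ^ (3 * (k + 1)) := by
      simp only [f', sub_apply, smul_apply, smul_eq_mul]
      congr 2
      exact congrFun (ModularForm.coe_pow E₄ (3 * (k + 1))) τ
    have hf' : HasQExp N f' (F - C a * twist N 1 e ^ (3 * (k + 1))) := fun τ ↦ by
      rw [hf'τ]
      exact (hf τ).sub ((HasValueAt.C a _).mul ((hE τ).pow _))
    obtain ⟨g, D, G, hg, -, -, hfg⟩ := hf'.exists_div_discriminant hN (by simp [hEc, a])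
    obtain ⟨P, hP, hPk, hPτ⟩ := ih hg
    refine ⟨P + .C a * .X ^ (k + 1), ?_, ?_, fun τ ↦ ?_⟩
    · exact Polynomial.natDegree_add_le_of_degree_le (by lia) (Polynomial.natDegree_C_mul_X_pow_le _ _)
    · rw [Polynomial.coeff_add, Polynomial.coeff_eq_zero_of_natDegree_lt (by lia)]
      simp
    · have h := hfg τ
      rw [hf'τ, hPτ] at h
      have hj : discriminant τ ^ (k + 1) * jFun τ ^ (k + 1) = E₄ τ ^ (3 * (k + 1)) := by
        rw [← mul_pow, jFun, mul_div_cancel₀ _ (discriminant_ne_zero τ), pow_mul]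
      simp only [map_add, map_mul, Polynomial.aeval_C, map_pow, Polynomial.aeval_X]
      have ha : algebraMap AlgInt ℂ a = a := rfl
      rw [ha]
      linear_combination h - a * hj

lemma isIntegral_of_aeval_eq_zero {A B : Type*} [CommRing A] [CommRing B] [Algebra A B]
    {P : Polynomial A} {k : ℕ} (hP : P.natDegree ≤ k)
    (hk : IsUnit (P.coeff k)) {x : B} (hx : P.aeval x = 0) : IsIntegral A x := by
  obtain ⟨u, hu⟩ := hk.exists_left_inv
  have hdeg : (Polynomial.C u * P).natDegree ≤ k := (Polynomial.natDegree_C_mul_le u P).trans hP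
  have hcoeff : (Polynomial.C u * P).coeff k = 1 := by rw [Polynomial.coeff_C_mul, hu]
  refine ⟨_, Polynomial.monic_of_natDegree_le_of_coeff_eq_one k hdeg hcoeff, ?_⟩
  rw [← Polynomial.aeval_def, map_mul, hx, mul_zero]

/-- A zero of a level one form whose expansion has algebraic integer coefficients and unit leading
coefficient has integral `j`-invariant. -/
lemma HasQExp.isIntegral_jFun {N : ℕ} (hN : 0 < N) (k : ℕ) :
    ∀ {f : ModularForm 𝒮ℒ (12 * k)} {F : AlgInt⟦X⟧} {n : ℕ} {τ : ℍ}, HasQExp N f F →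
    UnitLead F n → f τ = 0 → IsIntegral ℤ (jFun τ) := by
  induction k with
  | zero =>
    intro f F n τ hf hF h0
    obtain ⟨P, hP, hPk, hPτ⟩ := hf.exists_polynomial hN 0
    rw [Polynomial.eq_C_of_natDegree_le_zero hP, hPk] at hPτ
    simp only [pow_zero, one_mul, Polynomial.aeval_C] at hPτ
    have hf0 : f = 0 := by
      ext σ
      rw [hPτ, ← hPτ τ, h0]
      rfl
    have := hf.qExpansion_eq hN
    rw [hf0, FunLike.coe_zero, qExpansion_zero,
      ← map_zero (PowerSeries.map (algebraMap AlgInt ℂ))] at this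
    obtain ⟨U, hU, rfl⟩ := hF
    exact absurd (map_algInt_injective this).symm
      (mul_ne_zero (pow_ne_zero n X_ne_zero) hU.ne_zero)
  | succ k ih =>
    intro f F n τ hf hF h0
    rcases n.eq_zero_or_pos with rfl | hn
    · obtain ⟨P, hP, hPk, hPτ⟩ := hf.exists_polynomial hN (k + 1)
      obtain ⟨U, hU, rfl⟩ := hF
      refine isIntegral_trans (A := AlgInt) _ <| isIntegral_of_aeval_eq_zero hP ?_ ((mul_eq_zero.1 ((hPτ τ).symm.trans h0)).resolve_left
        (pow_ne_zero _ (discriminant_ne_zero τ)))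
      rw [hPk]
      simpa using isUnit_iff_constantCoeff.1 hU
    · obtain ⟨U, hU, rfl⟩ := hF
      obtain ⟨g, D, G, hg, ⟨V, hV, rfl⟩, hFG, hfg⟩ :=
        hf.exists_div_discriminant hN (by simp [hn.ne'])
      have hNn : N ≤ n := by
        by_contra! hlt
        have := congrArg (coeff n) hFG
        rw [mul_assoc, coeff_X_pow_mul', coeff_X_pow_mul', if_pos le_rfl, if_neg (by lia),
          Nat.sub_self, coeff_zero_eq_constantCoeff] at this
        exact (isUnit_iff_constantCoeff.1 hU).ne_zero this
      obtain ⟨i, rfl⟩ := Nat.exists_eq_add_of_le hNn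
      obtain ⟨W, hW⟩ := hV.exists_right_inv
      rw [pow_add, mul_assoc, mul_assoc] at hFG
      have hG := mul_left_cancel₀ (pow_ne_zero N X_ne_zero) hFG
      refine ih hg (n := i) ⟨W * U, (IsUnit.of_mul_eq_one_right _ hW).mul hU, ?_⟩ ?_
      · linear_combination -G * hW - W * hG
      · exact (mul_eq_zero.1 ((hfg τ).symm.trans h0)).resolve_left (discriminant_ne_zero τ)

section Resultant

variable {m : ℤ}

/-- The real matrix underlying an integral matrix of nonzero determinant. -/
def FixedDetMatrix.toGL (hm : m ≠ 0) (A : FixedDetMatrix (Fin 2) ℤ m) : GL (Fin 2) ℝ :=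
  .mkOfDetNeZero (A.1.map (Int.cast : ℤ → ℝ)) <| by
    have := (Int.castRingHom ℝ).map_det A.1
    rw [A.2] at this
    exact fun h ↦ hm (by simpa using this.trans h)

/-- Right multiplication by `SL(2, ℤ)` on integral matrices of given determinant. -/
def FixedDetMatrix.mulRight (A : FixedDetMatrix (Fin 2) ℤ m) (γ : SL(2, ℤ)) :
    FixedDetMatrix (Fin 2) ℤ m :=
  ⟨A.1 * γ.1, by rw [Matrix.det_mul, A.2, γ.2, mul_one]⟩

lemma FixedDetMatrix.toGL_smul (hm : m ≠ 0) (γ : SL(2, ℤ)) (A : FixedDetMatrix (Fin 2) ℤ m) :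
    (γ • A).toGL hm = Matrix.SpecialLinearGroup.mapGL ℝ γ * A.toGL hm := by
  ext i j
  simp [FixedDetMatrix.toGL, FixedDetMatrices.smul_coe, Matrix.mul_apply,
    Matrix.GeneralLinearGroup.mkOfDetNeZero]

lemma FixedDetMatrix.toGL_mulRight (hm : m ≠ 0) (γ : SL(2, ℤ)) (A : FixedDetMatrix (Fin 2) ℤ m) :
    (A.mulRight γ).toGL hm = A.toGL hm * Matrix.SpecialLinearGroup.mapGL ℝ γ := by
  ext i j
  simp [FixedDetMatrix.toGL, FixedDetMatrix.mulRight, Matrix.mul_apply,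
    Matrix.GeneralLinearGroup.mkOfDetNeZero]

/-- For forms `f`, `g` of weight `12`, a form of weight `24` vanishing where `f / g` agrees
with its translate by `A`. -/
def translateDiff (f g : ModularForm 𝒮ℒ 12) (A : GL (Fin 2) ℝ) : ℍ → ℂ :=
  ⇑f * (⇑g ∣[(12 : ℤ)] A) - (⇑f ∣[(12 : ℤ)] A) * ⇑g

variable (f g : ModularForm 𝒮ℒ 12)

lemma translateDiff_mul_left (γ : SL(2, ℤ)) (A : GL (Fin 2) ℝ) :
    translateDiff f g (Matrix.SpecialLinearGroup.mapGL ℝ γ * A) = translateDiff f g A := by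
  have hf : ⇑f ∣[(12 : ℤ)] Matrix.SpecialLinearGroup.mapGL ℝ γ = ⇑f :=
    f.slash_action_eq' _ ⟨γ, rfl⟩
  have hg : ⇑g ∣[(12 : ℤ)] Matrix.SpecialLinearGroup.mapGL ℝ γ = ⇑g :=
    g.slash_action_eq' _ ⟨γ, rfl⟩
  rw [translateDiff, translateDiff, SlashAction.slash_mul, SlashAction.slash_mul, hf, hg]

lemma translateDiff_slash (A : GL (Fin 2) ℝ) (γ : SL(2, ℤ)) :
    translateDiff f g A ∣[(24 : ℤ)] γ =
      translateDiff f g (A * Matrix.SpecialLinearGroup.mapGL ℝ γ) := by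
  have h (a b : ℍ → ℂ) := mul_slash_SL2 12 12 γ a b
  norm_num only at h
  have hf : ⇑f ∣[(12 : ℤ)] γ = ⇑f := f.slash_action_eq' _ ⟨γ, rfl⟩
  have hg : ⇑g ∣[(12 : ℤ)] γ = ⇑g := g.slash_action_eq' _ ⟨γ, rfl⟩
  rw [translateDiff, translateDiff, sub_eq_add_neg, SlashAction.add_slash, SlashAction.neg_slash,
    h, h, hf, hg, SlashAction.slash_mul, SlashAction.slash_mul, sub_eq_add_neg]
  rfl

lemma slash_apply_of_det_pos (f : ℍ → ℂ) (k : ℤ) {A : GL (Fin 2) ℝ} (hA : 0 < A.det.val)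
    (τ : ℍ) : (f ∣[k] A) τ = f (A • τ) * |A.det.val| ^ (k - 1) * denom A τ ^ (-k) := by
  rw [slash_apply, σ, if_pos hA]
  rfl

lemma mdifferentiable_slash {f : ℍ → ℂ} (hf : MDiff f) (k : ℤ) {A : GL (Fin 2) ℝ}
    (hA : 0 < A.det.val) : MDiff (f ∣[k] A) := by
  have : f ∣[k] A = fun τ ↦ f (A • τ) * |A.det.val| ^ (k - 1) * denom A τ ^ (-k) :=
    funext (slash_apply_of_det_pos f k hA)
  rw [this]
  exact ((hf.comp (mdifferentiable_smul hA)).mul mdifferentiable_const).mul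
    (mdifferentiable_denom_zpow A (-k))

lemma mdifferentiable_translateDiff {A : GL (Fin 2) ℝ} (hA : 0 < A.det.val) :
    MDiff (translateDiff f g A) :=
  (f.holo'.mul (mdifferentiable_slash g.holo' 12 hA)).sub
    ((mdifferentiable_slash f.holo' 12 hA).mul g.holo')

lemma translateDiff_eq_zero {A : GL (Fin 2) ℝ} (hA : 0 < A.det.val) {τ : ℍ} (hτ : A • τ = τ) :
    translateDiff f g A τ = 0 := by
  simp only [translateDiff, Pi.sub_apply, Pi.mul_apply, slash_apply_of_det_pos _ _ hA, hτ]
  ring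

/-- The `SL(2, ℤ)`-classes of integral matrices of determinant `m`. -/
abbrev MatrixClasses (m : ℤ) : Type :=
  MulAction.orbitRel.Quotient SL(2, ℤ) (FixedDetMatrix (Fin 2) ℤ m)

lemma MatrixClasses.exists_rep (hm : m ≠ 0) (c : MatrixClasses m) :
    ∃ A ∈ FixedDetMatrices.reps m, (Quotient.mk _ A : MatrixClasses m) = c := by
  induction c using Quotient.inductionOn with | h A => ?_
  induction A using FixedDetMatrices.induction_on hm with
  | h0 A h10 h00 h01 h11 => exact ⟨A, ⟨h10, h00, h01, h11⟩, rfl⟩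
  | hS B hB =>
    obtain ⟨A, hA, h⟩ := hB
    exact ⟨A, hA, h.trans (Quotient.sound ⟨ModularGroup.S⁻¹, inv_smul_smul _ _⟩)⟩
  | hT B hB =>
    obtain ⟨A, hA, h⟩ := hB
    exact ⟨A, hA, h.trans (Quotient.sound ⟨ModularGroup.T⁻¹, inv_smul_smul _ _⟩)⟩

lemma MatrixClasses.finite (hm : m ≠ 0) : Finite (MatrixClasses m) :=
  Finite.of_surjective (fun A : FixedDetMatrices.reps m ↦ (Quotient.mk _ A.1 : MatrixClasses m))
    fun c ↦ by
      obtain ⟨A, hA, h⟩ := c.exists_rep hm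
      exact ⟨⟨A, hA⟩, h⟩

/-- Right multiplication by `SL(2, ℤ)` on classes. -/
def MatrixClasses.mulRight (γ : SL(2, ℤ)) : MatrixClasses m → MatrixClasses m :=
  Quotient.map (fun A ↦ A.mulRight γ) <| by
    rintro _ B ⟨δ, rfl⟩
    exact ⟨δ, FixedDetMatrices.ext' _ _ (mul_assoc _ _ _).symm⟩

lemma MatrixClasses.mulRight_bijective (γ : SL(2, ℤ)) :
    Function.Bijective (MatrixClasses.mulRight (m := m) γ) := by
  have key (γ δ : SL(2, ℤ)) (h : γ.1 * δ.1 = 1) (c : MatrixClasses m) :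
      (c.mulRight γ).mulRight δ = c := by
    induction c using Quotient.inductionOn with | h A => ?_
    refine congrArg _ (FixedDetMatrices.ext' _ _ ?_)
    exact (mul_assoc _ _ _).trans (by rw [h, mul_one])
  have h1 : γ.1 * (γ⁻¹).1 = 1 := congrArg Subtype.val (mul_inv_cancel γ)
  have h2 : (γ⁻¹).1 * γ.1 = 1 := congrArg Subtype.val (inv_mul_cancel γ)
  exact Function.bijective_iff_has_inverse.2 ⟨_, key γ γ⁻¹ h1, key γ⁻¹ γ h2⟩

/-- `translateDiff` on the class of a matrix. -/
def MatrixClasses.translateDiff (hm : m ≠ 0) (c : MatrixClasses m) : ℍ → ℂ :=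
  Quotient.lift (fun A ↦ _root_.translateDiff f g (A.toGL hm)) (by
    rintro _ B ⟨δ, rfl⟩
    simp only [FixedDetMatrix.toGL_smul, translateDiff_mul_left]) c

lemma MatrixClasses.translateDiff_slash (hm : m ≠ 0) (c : MatrixClasses m) (γ : SL(2, ℤ)) :
    c.translateDiff f g hm ∣[(24 : ℤ)] γ = (c.mulRight γ).translateDiff f g hm := by
  induction c using Quotient.inductionOn with | h A => ?_
  refine (_root_.translateDiff_slash f g (A.toGL hm) γ).trans ?_
  rw [← FixedDetMatrix.toGL_mulRight]
  rfl

lemma FixedDetMatrix.det_toGL (hm : m ≠ 0) (A : FixedDetMatrix (Fin 2) ℤ m) :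
    (A.toGL hm).det.val = m := by
  have := (Int.castRingHom ℝ).map_det A.1
  rw [A.2] at this
  exact this.symm

lemma FixedDetMatrix.coe_toGL_smul (hm : 0 < m) (A : FixedDetMatrix (Fin 2) ℤ m) (τ : ℍ) :
    ((A.toGL hm.ne' • τ : ℍ) : ℂ) = (A.1 0 0 * τ + A.1 0 1) / (A.1 1 0 * τ + A.1 1 1) := by
  rw [coe_smul_of_det_pos (by rw [A.det_toGL]; exact_mod_cast hm)]
  simp [num, denom, FixedDetMatrix.toGL, Matrix.GeneralLinearGroup.mkOfDetNeZero]

/-- The modular form `E₄³`. -/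
def E₄cube : ModularForm 𝒮ℒ 12 := ModularForm.mcast (by norm_num) (E₄.pow 3)

lemma E₄cube_apply (τ : ℍ) : E₄cube τ = E₄ τ ^ 3 :=
  congrFun (ModularForm.coe_pow E₄ 3) τ

/-- The discriminant as a modular form. -/
def discriminantForm : ModularForm 𝒮ℒ 12 := CuspForm.discriminant.toModularFormₗ

lemma isIntegral_exp_div (b : ℤ) (d : ℕ) (hd : 0 < d) :
    ∃ ζ : AlgInt, IsUnit ζ ∧ (ζ : ℂ) = Complex.exp (2 * π * Complex.I * b / d) := by
  have hpow : Complex.exp (2 * π * Complex.I * b / d) ^ d = 1 := by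
    rw [← Complex.exp_nat_mul, Complex.exp_eq_one_iff]
    refine ⟨b, ?_⟩
    have : (d : ℂ) ≠ 0 := by exact_mod_cast hd.ne'
    field_simp
  let ζ : AlgInt := ⟨Complex.exp (2 * π * Complex.I * b / d),
    IsIntegral.of_pow hd (by rw [hpow]; exact isIntegral_one)⟩
  exact ⟨ζ, IsUnit.of_pow_eq_one (n := d) (Subtype.ext hpow) hd.ne', rfl⟩

lemma qParam_toGL_smul {n : ℕ} (hn : 0 < (n : ℤ)) (A : FixedDetMatrix (Fin 2) ℤ n)
    {a d : ℕ} (h10 : A.1 1 0 = 0) (ha : A.1 0 0 = a) (hd : A.1 1 1 = d) (hd0 : 0 < d)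
    (had : a * d = n) (τ : ℍ) :
    𝕢 1 (A.toGL hn.ne' • τ : ℍ) =
      Complex.exp (2 * π * Complex.I * A.1 0 1 / d) * 𝕢 n τ ^ (a ^ 2) := by
  have hd' : (d : ℂ) ≠ 0 := by exact_mod_cast hd0.ne'
  have ha' : (a : ℂ) ≠ 0 := by
    rintro h
    simp only [Nat.cast_eq_zero] at h
    simp [← had, h] at hn
  rw [Function.Periodic.qParam, Function.Periodic.qParam, ← Complex.exp_nat_mul,
    ← Complex.exp_add, A.coe_toGL_smul hn, h10, ha, hd]
  have hn' : (n : ℂ) = a * d := by exact_mod_cast had.symm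
  congr 1
  push_cast
  rw [hn', zero_mul, zero_add]
  field_simp
  ring

lemma exists_hasQExp_translateDiff {n : ℕ} (hn : 0 < (n : ℤ)) (hsq : ¬ IsSquare n)
    {A : FixedDetMatrix (Fin 2) ℤ n} (hA : A ∈ FixedDetMatrices.reps n) :
    ∃ (κ : ℂ) (F : AlgInt⟦X⟧), (∃ l, UnitLead F l) ∧
      HasQExp n (κ • translateDiff E₄cube discriminantForm (A.toGL hn.ne')) F := by
  obtain ⟨h10, h00, -, -⟩ := hA
  have hdet : A.1 0 0 * A.1 1 1 = n := by
    simpa [Matrix.det_fin_two, h10] using A.2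
  have h11 : 0 < A.1 1 1 := pos_of_mul_pos_right (hn.trans_eq hdet.symm) h00.le
  obtain ⟨a, ha⟩ := Int.eq_ofNat_of_zero_le h00.le
  obtain ⟨d, hd⟩ := Int.eq_ofNat_of_zero_le h11.le
  have ha0 : 0 < a := by lia
  have hd0 : 0 < d := by lia
  have had : a * d = n := by rw [ha, hd] at hdet; exact_mod_cast hdet
  obtain ⟨ζ, hζ, hζ'⟩ := isIntegral_exp_div (A.1 0 1) d hd0
  have hq (τ : ℍ) : 𝕢 1 (A.toGL hn.ne' • τ : ℍ) = ζ * 𝕢 n τ ^ (a ^ 2) := by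
    rw [hζ', qParam_toGL_smul hn A h10 ha hd hd0 had]
  obtain ⟨e, he0, he⟩ := exists_hasSum_E₄
  obtain ⟨D, hD0, hD1, hD⟩ := exists_hasSum_discriminant
  have hn' : 0 < n := by lia
  have ha2 : 0 < a ^ 2 := by positivity
  let F := twist n 1 e ^ 3 * twist (a ^ 2) ζ D - twist (a ^ 2) ζ e ^ 3 * twist n 1 D
  have hpos : 0 < (A.toGL hn.ne').det.val := by rw [A.det_toGL]; exact_mod_cast hn
  refine ⟨((n : ℂ) ^ 11)⁻¹ * d ^ 12, F, ?_, fun τ ↦ ?_⟩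
  · refine UnitLead.sub_of_ne
      (((unitLead_twist_zero 1 he0).pow 3).mul (unitLead_twist_one ha2 hζ hD0 hD1))
      (((unitLead_twist_zero ζ he0).pow 3).mul (unitLead_twist_one hn' isUnit_one hD0 hD1)) ?_
    rintro h
    exact hsq ⟨a, by lia⟩
  · have h1 := HasQExp.of_hasSum_id hn' he τ
    have h2 := HasQExp.of_hasSum_id hn' hD τ
    have h3 := HasQExp.of_hasSum ha2 he hq τ
    have h4 := HasQExp.of_hasSum ha2 hD hq τ
    convert ((h1.pow 3).mul h4).sub ((h3.pow 3).mul h2) using 1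
    have hdenom : denom (A.toGL hn.ne') τ = d := by
      simp [denom, FixedDetMatrix.toGL, Matrix.GeneralLinearGroup.mkOfDetNeZero, h10, hd]
    have hΔ (τ : ℍ) : discriminantForm τ = discriminant τ := rfl
    simp only [translateDiff, Pi.smul_apply, Pi.sub_apply, Pi.mul_apply,
      slash_apply_of_det_pos _ _ hpos, hdenom, A.det_toGL, E₄cube_apply, hΔ, Function.comp_apply,
      smul_eq_mul]
    have : (n : ℂ) ≠ 0 := by exact_mod_cast hn'.ne'
    have : (d : ℂ) ≠ 0 := by exact_mod_cast hd0.ne'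
    have hpow : ((d : ℂ) ^ (-12 : ℤ)) = ((d : ℂ) ^ 12)⁻¹ := by
      rw [zpow_neg]; rfl
    have hpow' : (((|((n : ℤ) : ℝ)| : ℝ) : ℂ) ^ (12 - 1 : ℤ)) = (n : ℂ) ^ 11 := by
      rw [abs_of_nonneg (by positivity)]
      norm_num
    rw [hpow, hpow']
    field_simp

/-- A slash-invariant holomorphic function with a power series expansion at infinity is a modular
form. -/
def modularFormOfHasQExp {N : ℕ} (hN : 0 < N) {k : ℤ} {f : ℍ → ℂ} {F : AlgInt⟦X⟧}
    (hF : HasQExp N f F) (hf : MDiff f) (hslash : ∀ γ : SL(2, ℤ), f ∣[k] γ = f) :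
    ModularForm 𝒮ℒ k where
  toFun := f
  slash_action_eq' := by
    rintro _ ⟨γ, rfl⟩
    exact hslash γ
  holo' := hf
  bdd_at_cusps' {c} hc := by
    rw [Subgroup.IsArithmetic.isCusp_iff_isCusp_SL2Z] at hc
    rw [OnePoint.isBoundedAt_iff_forall_SL2Z hc]
    intro γ _
    rw [hslash]
    exact isBoundedAtImInfty_of_hasSum_qExpansion (Nat.cast_pos.2 hN) hF

lemma isIntegral_jFun_of_fixed {n : ℕ} (hn : 0 < (n : ℤ)) (hsq : ¬ IsSquare n)
    (A : FixedDetMatrix (Fin 2) ℤ n) {τ : ℍ} (hτ : A.toGL hn.ne' • τ = τ) :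
    IsIntegral ℤ (jFun τ) := by
  classical
  have := MatrixClasses.finite hn.ne'
  have := Fintype.ofFinite (MatrixClasses n)
  let φ (c : MatrixClasses n) : ℍ → ℂ := c.translateDiff E₄cube discriminantForm hn.ne'
  have hrep (c : MatrixClasses n) : ∃ (κ : ℂ) (F : AlgInt⟦X⟧), (∃ l, UnitLead F l) ∧
      HasQExp n (κ • φ c) F := by
    obtain ⟨B, hB, rfl⟩ := c.exists_rep hn.ne'
    exact exists_hasQExp_translateDiff hn hsq hB
  choose κ F hlead hF using hrep
  have hdet (A : FixedDetMatrix (Fin 2) ℤ n) : 0 < (A.toGL hn.ne').det.val := by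
    rw [A.det_toGL]; exact_mod_cast hn
  have hmd (c : MatrixClasses n) : MDiff (φ c) := by
    induction c using Quotient.inductionOn with | h B => ?_
    exact mdifferentiable_translateDiff _ _ (hdet B)
  let G : ℍ → ℂ := (∏ c, κ c) • ∏ c, φ c
  have hG : HasQExp n G (∏ c, F c) := fun σ ↦ by
    have : G σ = ∏ c, (κ c • φ c) σ := by
      simp [G, Finset.prod_mul_distrib]
    rw [this]
    exact HasValueAt.prod fun c _ ↦ hF c σ
  have hslash (γ : SL(2, ℤ)) :
      G ∣[(12 * (2 * Fintype.card (MatrixClasses n) : ℕ) : ℤ)] γ = G := by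
    have h := prod_slash (k := 24) (g := Matrix.SpecialLinearGroup.mapGL ℝ γ) (f := φ)
      (s := Finset.univ)
    have hw : (12 * (2 * Fintype.card (MatrixClasses n) : ℕ) : ℤ) =
        24 * (Finset.univ : Finset (MatrixClasses n)).card := by
      push_cast [Finset.card_univ]; ring
    simp only [G]
    rw [SL_smul_slash, hw]
    refine congrArg _ (h.trans ?_)
    have hφ (c : MatrixClasses n) : φ c ∣[(24 : ℤ)] Matrix.SpecialLinearGroup.mapGL ℝ γ =
      φ (c.mulRight γ) := c.translateDiff_slash _ _ _ γ
    simp only [hφ]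
    simpa using (MatrixClasses.mulRight_bijective γ).prod_comp φ
  have hGd : MDiff G := by
    have := MDifferentiable.prod (t := Finset.univ) (f := φ) fun c _ ↦ hmd c
    exact this.const_smul _
  obtain ⟨l, hl⟩ := UnitLead.exists_prod (s := Finset.univ) fun c _ ↦ hlead c
  refine HasQExp.isIntegral_jFun (by lia : 0 < n) _
    (f := modularFormOfHasQExp (by lia) hG hGd hslash) (τ := τ) hG hl ?_
  have h0 : φ (Quotient.mk _ A) τ = 0 := translateDiff_eq_zero _ _ (hdet A) hτ
  change G τ = 0
  simp only [G, Pi.smul_apply, Finset.prod_apply]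
  rw [Finset.prod_eq_zero (f := fun c ↦ φ c τ) (Finset.mem_univ _) h0, smul_zero]

end Resultant

lemma isIntegral_latticeJ_of_im_pos {ω₁ ω₂ : ℂ} (h₁ : ω₁ ≠ 0) (him : 0 < (ω₂ / ω₁).im)
    (hcm : HasCM (latticeOf ω₁ ω₂)) : IsIntegral ℤ (latticeJ (latticeOf ω₁ ω₂)) := by
  let τ : ℍ := ⟨ω₂ / ω₁, him⟩
  have hτ : ω₂ = τ * ω₁ := (div_mul_cancel₀ ω₂ h₁).symm
  rw [latticeJ_latticeOf τ h₁ hτ]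
  obtain ⟨a, b, c, d, hpos, hsq, hfix⟩ := exists_fixing_matrix τ h₁ hτ hcm
  obtain ⟨n, hn⟩ := Int.eq_ofNat_of_zero_le hpos.le
  rw [hn] at hpos hsq
  let A : FixedDetMatrix (Fin 2) ℤ n := ⟨!![a, b; c, d], by rw [Matrix.det_fin_two_of, hn]⟩
  refine isIntegral_jFun_of_fixed hpos (fun ⟨r, hr⟩ ↦ hsq ⟨r, by exact_mod_cast hr⟩) A ?_
  ext
  have hne : (c * τ + d : ℂ) ≠ 0 := by
    have := denom_ne_zero (A.toGL hpos.ne') τ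
    simpa [denom, FixedDetMatrix.toGL, Matrix.GeneralLinearGroup.mkOfDetNeZero, A] using this
  rw [A.coe_toGL_smul hpos, div_eq_iff (by simpa [A] using hne)]
  simpa [A, mul_comm] using hfix

end

/-- The `j`-invariant of an elliptic curve with complex multiplication by an order in an
imaginary quadratic field is an algebraic integer. -/
theorem j_isIntegral_of_cm (ω₁ ω₂ : ℂ) (hb : IsLatticeBasis ω₁ ω₂)
    (hcm : HasCM (latticeOf ω₁ ω₂)) :
    IsIntegral ℤ (latticeJ (latticeOf ω₁ ω₂)) := by
  obtain ⟨h₁, him⟩ := hb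
  rcases him.lt_or_gt with h | h
  · have h₂ : ω₂ ≠ 0 := by rintro rfl; simp at h
    have hswap : latticeOf ω₁ ω₂ = latticeOf ω₂ ω₁ := by
      rw [latticeOf, latticeOf, Set.pair_comm]
    rw [hswap] at hcm ⊢
    refine isIntegral_latticeJ_of_im_pos h₂ ?_ hcm
    rw [← inv_div, Complex.inv_im]
    exact div_pos (neg_pos.2 h) (Complex.normSq_pos.2 (div_ne_zero h₂ h₁))
  · exact isIntegral_latticeJ_of_im_pos h₁ h hcm

end
end

section
/- Let S' be a smooth projective curve over a number field K, s₀ ∈ S'(K), and x ∈ K(S') a rational function. Then there exists a finite cover π: C' → S' with C' a smooth projective curve over a finite extension of K and a function x' ∈ K̄(C') such that the zero divisor of x' is supported exactly on π^{-1}(s₀), i.e. x' vanishes only at the preimages of s₀. -/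
noncomputable section

open scoped Polynomial

/-- A family which stays independent modulo a separating nonzerodivisor `p` is independent. -/
theorem linearIndependent_of_forall_dvd {R N ι : Type*} [CommRing R] [AddCommGroup N] [Module R N]
    [Fintype ι] (p : R) (hsep : ∀ r : R, (∀ k : ℕ, p ^ k ∣ r) → r = 0)
    (htf : ∀ x : N, p • x = 0 → x = 0) (b : ι → N)
    (h : ∀ g : ι → R, (∃ x, ∑ i, g i • b i = p • x) → ∀ i, p ∣ g i) :
    LinearIndependent R b := by
  rw [Fintype.linearIndependent_iff]
  have key : ∀ (k : ℕ) (g : ι → R), ∑ i, g i • b i = 0 → ∀ i, p ^ k ∣ g i := by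
    intro k
    induction k with
    | zero => intro g _ i; simp
    | succ k ih =>
      intro g hg
      choose q hq using h g ⟨0, by simpa using hg⟩
      have hq0 : ∑ i, q i • b i = 0 := by
        apply htf
        rw [Finset.smul_sum, ← hg]
        exact Finset.sum_congr rfl fun i _ => by rw [hq i, mul_smul]
      intro i
      rw [hq i, pow_succ']
      exact mul_dvd_mul_left p (ih q hq0 i)
  exact fun g hg i => hsep _ fun k => key k g hg i

theorem eq_zero_of_forall_pow_dvd {R : Type*} [CommRing R] [IsDomain R] [WfDvdMonoid R] {p : R}
    (hp : ¬IsUnit p) (r : R) (hr : ∀ k : ℕ, p ^ k ∣ r) : r = 0 := by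
  by_contra h0
  obtain ⟨k, hk⟩ := FiniteMultiplicity.of_not_isUnit hp h0
  exact hk (hr _)

/-- A finite-rank torsion-free module over a principal ideal domain has finite reduction modulo
a prime element, even if the module itself is not finite. -/
theorem finite_quotient_smul_top {R N : Type*} [CommRing R] [IsDomain R] [IsPrincipalIdealRing R]
    [AddCommGroup N] [Module R N] {n : ℕ} (hn : Module.rank R N ≤ n) {p : R} (hp : Prime p)
    (htf : ∀ x : N, p • x = 0 → x = 0) :
    Module.Finite R (N ⧸ (Ideal.span {p} • ⊤ : Submodule R N)) := by
  set I : Ideal R := Ideal.span {p} with hI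
  have hmax : I.IsMaximal := PrincipalIdealRing.isMaximal_of_irreducible hp.irreducible
  let _ : Field (R ⧸ I) := Ideal.Quotient.field I
  have hrank : Module.rank (R ⧸ I) (N ⧸ (I • ⊤ : Submodule R N)) ≤ n := by
    refine rank_le fun s hs => ?_
    choose b hb using fun i : s => Submodule.mkQ_surjective (I • ⊤ : Submodule R N) i.1
    have hli : LinearIndependent R b := by
      refine linearIndependent_of_forall_dvd p (eq_zero_of_forall_pow_dvd hp.not_isUnit) htf b ?_
      rintro g ⟨x, hx⟩ i
      have h0 := Fintype.linearIndependent_iff.mp hs (fun i => Ideal.Quotient.mk I (g i)) ?_ i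
      · rwa [Ideal.Quotient.eq_zero_iff_mem, hI, Ideal.mem_span_singleton] at h0
      · have : (I • ⊤ : Submodule R N).mkQ (∑ i, g i • b i) = 0 := by
          rw [hx, Submodule.mkQ_apply, Submodule.Quotient.mk_eq_zero]
          exact Submodule.smul_mem_smul (Ideal.mem_span_singleton_self p) trivial
        rw [← this, map_sum]
        refine Finset.sum_congr rfl fun i _ => ?_
        rw [map_smul, hb]
        rfl
    have := hli.cardinal_lift_le_rank.trans (Cardinal.lift_le.mpr hn)
    simpa using this
  have : Module.Finite (R ⧸ I) (N ⧸ (I • ⊤ : Submodule R N)) :=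
    Module.rank_lt_aleph0_iff.mp (hrank.trans_lt Cardinal.natCast_lt_aleph0)
  exact Module.Finite.trans (R ⧸ I) _

/-- Special case of the Krull–Akizuki theorem: no separability is assumed. -/
theorem isDedekindDomain_integralClosure (R E F : Type*) [CommRing R] [IsDomain R]
    [IsPrincipalIdealRing R] [Field E] [Field F] [Algebra R E] [IsFractionRing R E] [Algebra E F]
    [Algebra R F] [IsScalarTower R E F] [FiniteDimensional E F] :
    IsDedekindDomain (integralClosure R F) := by
  have hinj : Function.Injective (algebraMap R F) := by
    rw [IsScalarTower.algebraMap_eq R E F]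
    exact (algebraMap E F).injective.comp (IsFractionRing.injective R E)
  have hinjB : Function.Injective (algebraMap R (integralClosure R F)) := fun a b hab =>
    hinj (congrArg (algebraMap (integralClosure R F) F) hab)
  have hrank : Module.rank R (integralClosure R F) ≤ (Module.finrank E F : ℕ) := by
    refine rank_le fun s hs => ?_
    have h1 : LinearIndependent R (fun i : s => ((i : integralClosure R F) : F)) :=
      hs.map' (integralClosure R F).val.toLinearMap
        (LinearMap.ker_eq_bot.mpr Subtype.val_injective)
    simpa using ((LinearIndependent.iff_fractionRing R E).mp h1).fintype_card_le_finrank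
  have hint : IsIntegrallyClosed (integralClosure R F) :=
    integralClosure.isIntegrallyClosedOfFiniteExtension E
  have hnoeth : IsNoetherianRing (integralClosure R F) := by
    refine IsNoetherianRing.of_prime fun P hP => ?_
    rcases eq_or_ne P ⊥ with rfl | hbot
    · exact Submodule.fg_bot
    have hcomap : P.comap (algebraMap R (integralClosure R F)) ≠ ⊥ := fun h =>
      hbot (Ideal.eq_bot_of_comap_eq_bot h)
    have hprime : (P.comap (algebraMap R (integralClosure R F))).IsPrime := inferInstance
    obtain ⟨p, hpP, hp⟩ := hprime.exists_mem_prime_of_ne_bot hcomap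
    have htf : ∀ x : integralClosure R F, p • x = 0 → x = 0 := by
      intro x hx
      rw [Algebra.smul_def, mul_eq_zero] at hx
      exact hx.resolve_left fun h => hp.ne_zero (hinjB (by rw [h, map_zero]))
    have hfin := finite_quotient_smul_top hrank hp htf
    set J : Ideal (integralClosure R F) := Ideal.span {algebraMap R _ p} with hJ
    have hle : (Ideal.span {p} • ⊤ : Submodule R (integralClosure R F)) ≤
        LinearMap.ker (J.mkQ.restrictScalars R) := by
      rw [Submodule.smul_le]
      intro r hr x _
      obtain ⟨c, rfl⟩ := Ideal.mem_span_singleton.mp hr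
      rw [LinearMap.mem_ker, LinearMap.restrictScalars_apply, Submodule.mkQ_apply,
        Submodule.Quotient.mk_eq_zero, hJ, Ideal.mem_span_singleton, Algebra.smul_def, map_mul,
        mul_assoc]
      exact dvd_mul_right _ _
    have hfinJ : Module.Finite R (integralClosure R F ⧸ J) :=
      Module.Finite.of_surjective (Submodule.liftQ _ (J.mkQ.restrictScalars R) hle) <| by
        intro x
        obtain ⟨y, rfl⟩ := J.mkQ_surjective x
        exact ⟨Submodule.Quotient.mk y, by simp⟩
    have hN : IsNoetherian (integralClosure R F) (integralClosure R F ⧸ J) :=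
      isNoetherian_of_tower R inferInstance
    refine Submodule.fg_of_fg_map_of_fg_inf_ker J.mkQ (hN.noetherian _) ?_
    have hJP : J ≤ P := by
      rw [hJ, Ideal.span_singleton_le_iff_mem]
      exact hpP
    rw [Submodule.ker_mkQ, inf_eq_right.mpr hJP]
    exact ⟨{algebraMap R _ p}, by simp [hJ]⟩
  exact { }

theorem rank_quotient_range_pow_le {K V : Type*} [Field K] [AddCommGroup V] [Module K V]
    (φ : V →ₗ[K] V) {n : ℕ} (hn : Module.rank K (V ⧸ LinearMap.range φ) ≤ n) (m : ℕ) :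
    Module.rank K (V ⧸ LinearMap.range (φ ^ m)) ≤ (m * n : ℕ) := by
  induction m with
  | zero =>
    have : Subsingleton (V ⧸ LinearMap.range (φ ^ 0)) := by
      rw [Submodule.Quotient.subsingleton_iff, pow_zero]
      exact LinearMap.range_id
    simp
  | succ m ih =>
    have hle : LinearMap.range (φ ^ (m + 1)) ≤ LinearMap.range φ := by
      rw [pow_succ']
      exact LinearMap.range_comp_le_range _ _
    have hle' : LinearMap.range (φ ^ m) ≤ (LinearMap.range (φ ^ (m + 1))).comap φ := by
      rintro _ ⟨x, rfl⟩
      exact ⟨x, by rw [pow_succ']; rfl⟩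
    let f := Submodule.factor hle
    let g := Submodule.mapQ _ _ φ hle'
    have hker : LinearMap.ker f ≤ LinearMap.range g := by
      intro x hx
      obtain ⟨x, rfl⟩ := Submodule.mkQ_surjective _ x
      have : x ∈ LinearMap.range φ := by
        rw [← Submodule.Quotient.mk_eq_zero]
        exact hx
      obtain ⟨y, rfl⟩ := this
      exact ⟨Submodule.Quotient.mk y, rfl⟩
    rw [← LinearMap.rank_range_add_rank_ker f]
    calc Module.rank K (LinearMap.range f) + Module.rank K (LinearMap.ker f)
        ≤ n + (m * n : ℕ) := add_le_add ((Submodule.rank_le _).trans hn)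
          ((Submodule.rank_mono hker).trans ((rank_range_le g).trans ih))
      _ = ((m + 1) * n : ℕ) := by push_cast; ring

namespace ValuationSubring

variable {F : Type*} [Field F] (O : ValuationSubring F)

theorem inv_notMem_iff {x : F} : x⁻¹ ∉ O ↔ x ≠ 0 ∧ O.valuation x < 1 := by
  rcases eq_or_ne x 0 with rfl | hx
  · simp [O.zero_mem]
  · rw [← O.valuation_le_one_iff, map_inv₀, not_le,
      one_lt_inv₀ (zero_lt_iff.mpr ((map_ne_zero _).mpr hx))]
    simp [hx]

theorem mem_of_monic_of_eval_eq_zero {P : F[X]} (hP : P.Monic) (hcoeff : ∀ i, P.coeff i ∈ O)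
    {f : F} (hf : P.eval f = 0) : f ∈ O := by
  have hsub : (P.coeffs : Set F) ⊆ O.toSubring := by
    intro c hc
    obtain ⟨i, _, rfl⟩ := Polynomial.mem_coeffs_iff.mp hc
    exact hcoeff i
  have hint : IsIntegral O f := by
    refine ⟨P.toSubring O.toSubring hsub, (Polynomial.monic_toSubring _ _ _).mpr hP, ?_⟩
    rw [← hf, ← Polynomial.eval_map]
    congr 1
    exact Polynomial.map_toSubring P O.toSubring hsub
  obtain ⟨y, rfl⟩ := IsIntegrallyClosed.isIntegral_iff.mp hint
  exact y.2

theorem mem_of_isIntegral {R : Type*} [CommRing R] [Algebra R F]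
    (hR : ∀ r : R, algebraMap R F r ∈ O) {f : F} (hf : IsIntegral R f) : f ∈ O := by
  obtain ⟨P, hP, hPf⟩ := hf
  refine O.mem_of_monic_of_eval_eq_zero (hP.map (algebraMap R F)) (fun i => ?_)
    (by rwa [Polynomial.eval_map])
  rw [Polynomial.coeff_map]
  exact hR _

/-- The center of a valuation ring on a ring mapping into it. -/
def center {B : Type*} [CommRing B] [Algebra B F] (hB : ∀ b : B, algebraMap B F b ∈ O) :
    Ideal B where
  carrier := {b | O.valuation (algebraMap B F b) < 1}
  add_mem' {a b} ha hb := by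
    rw [Set.mem_ofPred_eq, map_add]
    exact (Valuation.map_add _ _ _).trans_lt (max_lt ha hb)
  zero_mem' := by simp
  smul_mem' c x hx := by
    rw [Set.mem_ofPred_eq, smul_eq_mul, map_mul, map_mul]
    exact (mul_le_of_le_one_left' ((O.valuation_le_one_iff _).mpr (hB c))).trans_lt hx

section center

variable {B : Type*} [CommRing B] [Algebra B F] (hB : ∀ b : B, algebraMap B F b ∈ O)

theorem mem_center {b : B} : b ∈ O.center hB ↔ O.valuation (algebraMap B F b) < 1 := Iff.rfl

theorem valuation_eq_one_of_notMem_center {b : B} (hb : b ∉ O.center hB) :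
    O.valuation (algebraMap B F b) = 1 :=
  le_antisymm ((O.valuation_le_one_iff _).mpr (hB b)) (not_lt.mp hb)

instance center_isPrime : (O.center hB).IsPrime where
  ne_top' := by
    rw [Ne, Ideal.eq_top_iff_one, mem_center]
    simp
  mem_or_mem' {a b} hab := by
    by_contra! h
    rw [mem_center, map_mul, map_mul, O.valuation_eq_one_of_notMem_center hB h.1,
      O.valuation_eq_one_of_notMem_center hB h.2] at hab
    simp at hab

variable [IsDedekindDomain B] [IsFractionRing B F]

theorem le_of_center_eq {O' : ValuationSubring F} (hB' : ∀ b : B, algebraMap B F b ∈ O')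
    (hne : O.center hB ≠ ⊥) (h : O.center hB = O'.center hB') : O ≤ O' := by
  intro f hf
  set P := O.center hB with hP
  have hS : P.primeCompl ≤ nonZeroDivisors B := P.primeCompl_le_nonZeroDivisors
  let A := Localization.subalgebra.ofField F P.primeCompl hS
  have hloc : IsLocalization.AtPrime A P := Localization.subalgebra.isLocalization_ofField F _ hS
  have hfrac : IsFractionRing A F := Localization.subalgebra.isFractionRing_ofField F _ hS
  have hdvr : IsDiscreteValuationRing A :=
    IsLocalization.AtPrime.isDiscreteValuationRing_of_dedekind_domain B hne A
  have hval : ∀ s : B, s ∉ P → O.valuation (algebraMap B F s) = 1 ∧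
      O'.valuation (algebraMap B F s) = 1 := fun s hs =>
    ⟨O.valuation_eq_one_of_notMem_center hB hs,
      O'.valuation_eq_one_of_notMem_center hB' (h ▸ hs)⟩
  have hquot : ∀ g : F, IsLocalization.IsInteger A g →
      ∃ a s : B, s ∉ P ∧ algebraMap B F s * g = algebraMap B F a := by
    rintro _ ⟨g, rfl⟩
    obtain ⟨⟨a, s⟩, has⟩ := IsLocalization.surj P.primeCompl g
    refine ⟨a, s, s.2, ?_⟩
    have := congrArg (algebraMap A F) has
    rw [map_mul, ← IsScalarTower.algebraMap_apply, ← IsScalarTower.algebraMap_apply] at this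
    rw [mul_comm]
    exact this
  rw [← valuation_le_one_iff] at hf ⊢
  rcases ValuationRing.isInteger_or_isInteger A f with hi | hi
  · obtain ⟨a, s, hs, has⟩ := hquot f hi
    have := congrArg O'.valuation has
    rw [map_mul, (hval s hs).2, one_mul] at this
    rw [this, valuation_le_one_iff]
    exact hB' a
  · rcases eq_or_ne f 0 with rfl | hf0
    · simp
    obtain ⟨a, s, hs, has⟩ := hquot _ hi
    have ha : a ∉ P := by
      intro ha
      rw [hP, mem_center, ← has, map_mul, (hval s hs).1, one_mul, map_inv₀,
        inv_lt_one₀ (zero_lt_iff.mpr ((map_ne_zero _).mpr hf0))] at ha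
      exact absurd hf (not_le.mpr ha)
    have := congrArg O'.valuation has
    rw [map_mul, (hval s hs).2, (hval a ha).2, one_mul, map_inv₀, inv_eq_one] at this
    exact this.le

/-- In a Dedekind domain, an element separating one valuation ring from all the others which
contain `u` in their maximal ideal. -/
theorem exists_separating (hB : ∀ b : B, algebraMap B F b ∈ O)
    {u : B} (hu0 : u ≠ 0) (hu : O.valuation (algebraMap B F u) < 1) :
    ∃ h : B, O.valuation (algebraMap B F h) = 1 ∧ ∀ O' : ValuationSubring F,
      (∀ b : B, algebraMap B F b ∈ O') → O' ≠ O →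
      algebraMap B F h / algebraMap B F u ∈ O' := by
  set P := O.center hB with hP
  have huP : u ∈ P := hu
  have hPbot : P ≠ ⊥ := fun h => hu0 (by simpa [h] using huP)
  have hfm : FiniteMultiplicity P (Ideal.span {u}) :=
    FiniteMultiplicity.of_not_isUnit
      (by rw [Ideal.isUnit_iff]; exact (O.center_isPrime hB).ne_top)
      (by simpa [Ideal.span_singleton_eq_bot] using hu0)
  obtain ⟨J, hJ, hPJ⟩ := hfm.exists_eq_pow_mul_and_not_dvd
  rw [Ideal.dvd_iff_le] at hPJ
  obtain ⟨h, hhJ, hhP⟩ := Set.not_subset.mp hPJ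
  have huF : algebraMap B F u ≠ 0 := by
    simpa using hu0
  refine ⟨h, O.valuation_eq_one_of_notMem_center hB hhP, fun O' hB' hO' => ?_⟩
  have hnle : ¬P ≤ O'.center hB' := by
    intro hle
    have hmax : P.IsMaximal := (O.center_isPrime hB).isMaximal hPbot
    have heq := hmax.eq_of_le (O'.center_isPrime hB').ne_top hle
    exact hO' (le_antisymm (O'.le_of_center_eq hB' hB (heq ▸ hPbot) heq.symm)
      (O.le_of_center_eq hB hB' hPbot heq))
  obtain ⟨s, hsP, hs⟩ := Set.not_subset.mp hnle
  have hmem := Ideal.mul_mem_mul (Ideal.pow_mem_pow hsP (multiplicity P (Ideal.span {u}))) hhJ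
  rw [← hJ, Ideal.mem_span_singleton] at hmem
  obtain ⟨b, hb⟩ := hmem
  have hbF := congrArg (algebraMap B F) hb
  rw [map_mul, map_mul, map_pow] at hbF
  have hv : O'.valuation (algebraMap B F h / algebraMap B F u) =
      O'.valuation (algebraMap B F b) := by
    have h1 := congrArg O'.valuation hbF
    rw [map_mul, map_pow, O'.valuation_eq_one_of_notMem_center hB' hs, one_pow, one_mul,
      map_mul] at h1
    rw [map_div₀, h1, mul_div_cancel_left₀ _ ((map_ne_zero _).mpr huF)]
  rw [← valuation_le_one_iff, hv, valuation_le_one_iff]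
  exact hB' b

end center

end ValuationSubring

namespace ValuationSubring

variable {K F : Type*} [Field K] [Field F] [Algebra K F] (O : ValuationSubring F)

theorem aeval_mem (hK : ∀ c : K, algebraMap K F c ∈ O) {u : F} (hu : u ∈ O) (p : K[X]) :
    Polynomial.aeval u p ∈ O := by
  rw [Polynomial.aeval_eq_sum_range]
  refine sum_mem fun i _ => ?_
  rw [Algebra.smul_def]
  exact MulMemClass.mul_mem (hK _) (pow_mem hu i)

theorem aeval_mul_inv_pow_mem (hK : ∀ c : K, algebraMap K F c ∈ O) {u : F} (hu0 : u ≠ 0)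
    (hu : u⁻¹ ∈ O) {p : K[X]} {k : ℕ} (hp : p.natDegree ≤ k) :
    Polynomial.aeval u p * u⁻¹ ^ k ∈ O := by
  rw [Polynomial.aeval_eq_sum_range, Finset.sum_mul]
  refine sum_mem fun i hi => ?_
  have hik : i ≤ k := (Nat.lt_succ_iff.mp (Finset.mem_range.mp hi)).trans hp
  have : p.coeff i • u ^ i * u⁻¹ ^ k = algebraMap K F (p.coeff i) * u⁻¹ ^ (k - i) := by
    rw [Algebra.smul_def, mul_assoc, ← Nat.add_sub_of_le hik, pow_add, ← mul_assoc (u ^ i),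
      ← mul_pow, mul_inv_cancel₀ hu0, one_pow, one_mul, Nat.add_sub_cancel_left]
  rw [this]
  exact MulMemClass.mul_mem (hK _) (pow_mem hu _)

theorem X_pow_dvd_of_aeval_div_mem (hK : ∀ c : K, algebraMap K F c ∈ O) {u : F} (hu0 : u ≠ 0)
    (hu : O.valuation u < 1) (m : ℕ) (r : K[X]) (hr : Polynomial.aeval u r / u ^ m ∈ O) :
    Polynomial.X ^ m ∣ r := by
  have huO : u ∈ O := (O.valuation_le_one_iff u).mp hu.le
  induction m generalizing r with
  | zero => simp
  | succ m ih =>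
    have hsplit := congrArg (Polynomial.aeval u) (Polynomial.divX_mul_X_add r)
    rw [map_add, map_mul, Polynomial.aeval_X, Polynomial.aeval_C] at hsplit
    have hc : r.coeff 0 = 0 := by
      by_contra hc
      have hc1 : O.valuation (algebraMap K F (r.coeff 0)) < 1 := by
        have : algebraMap K F (r.coeff 0) =
            (Polynomial.aeval u r / u ^ (m + 1) * u ^ m - Polynomial.aeval u r.divX) * u := by
          rw [← hsplit]
          field_simp
          ring
        rw [this, map_mul]
        refine (mul_le_of_le_one_left' ((O.valuation_le_one_iff _).mpr ?_)).trans_lt hu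
        exact sub_mem (MulMemClass.mul_mem hr (pow_mem huO m)) (O.aeval_mem hK huO _)
      refine O.inv_notMem_iff.mpr ⟨by simpa using hc, hc1⟩ ?_
      rw [← map_inv₀]
      exact hK _
    have hX : r = Polynomial.X * r.divX := by
      conv_lhs => rw [← Polynomial.divX_mul_X_add r, hc]
      simp [mul_comm]
    have hdiv : Polynomial.aeval u r.divX / u ^ m ∈ O := by
      convert hr using 1
      rw [← hsplit, hc, map_zero, add_zero, pow_succ]
      field_simp
    rw [hX, pow_succ']
    exact mul_dvd_mul_left _ (ih _ hdiv)

end ValuationSubring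

section Riemann

variable {K F : Type*} [Field K] [Field F] [Algebra K F] [Algebra K[X] F] [IsScalarTower K K[X] F]

theorem algebraMap_eq_aeval_X (p : K[X]) :
    algebraMap K[X] F p = Polynomial.aeval (algebraMap K[X] F Polynomial.X) p := by
  rw [Polynomial.aeval_algebraMap_apply, Polynomial.aeval_X_left, AlgHom.id_apply]

/-- An element integral over `K[u]` has a pole of uniformly bounded order at the poles of `u`. -/
theorem exists_inv_pow_mul_mem_of_isIntegral (hinj : Function.Injective (algebraMap K[X] F))
    {f : F} (hf : IsIntegral K[X] f) :
    ∃ k : ℕ, ∀ O : ValuationSubring F, (∀ c : K, algebraMap K F c ∈ O) →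
      (algebraMap K[X] F Polynomial.X)⁻¹ ∈ O →
      (algebraMap K[X] F Polynomial.X)⁻¹ ^ k * f ∈ O := by
  obtain ⟨P, hP, hPf⟩ := hf
  set u := algebraMap K[X] F Polynomial.X with hu
  have hu0 : u ≠ 0 := fun h => Polynomial.X_ne_zero (hinj (by rw [← hu, h, map_zero]))
  refine ⟨P.support.sup fun i => (P.coeff i).natDegree, fun O hK huO => ?_⟩
  set k := P.support.sup fun i => (P.coeff i).natDegree with hk
  have hmonic : (P.map (algebraMap K[X] F)).Monic := hP.map _
  refine O.mem_of_monic_of_eval_eq_zero (P := (P.map (algebraMap K[X] F)).scaleRoots (u⁻¹ ^ k))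
    ((Polynomial.monic_scaleRoots_iff _).mpr hmonic) (fun i => ?_) ?_
  · rw [Polynomial.coeff_scaleRoots, Polynomial.coeff_map, hP.natDegree_map]
    rcases lt_trichotomy i P.natDegree with hi | rfl | hi
    · obtain ⟨d, hd⟩ : ∃ d, P.natDegree - i = d + 1 := ⟨P.natDegree - i - 1, by omega⟩
      rw [hd, pow_succ', ← mul_assoc, algebraMap_eq_aeval_X]
      refine MulMemClass.mul_mem (O.aeval_mul_inv_pow_mem hK hu0 huO ?_) (pow_mem (pow_mem huO k) d)
      by_cases h : i ∈ P.support
      · exact Finset.le_sup (f := fun i => (P.coeff i).natDegree) h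
      · simp [Polynomial.notMem_support_iff.mp h]
    · simp [hP.coeff_natDegree, O.one_mem]
    · simp [Polynomial.coeff_eq_zero_of_natDegree_lt hi, O.zero_mem]
  · have := Polynomial.scaleRoots_eval₂_eq_zero (p := P.map (algebraMap K[X] F)) (RingHom.id F)
      (r := f) (s := u⁻¹ ^ k) (by rwa [Polynomial.eval₂_id, Polynomial.eval_map])
    simpa [Polynomial.eval₂_id] using this

theorem rank_quotient_mulLeft_X_le (E : Type*) [Field E] [Algebra K[X] E] [IsFractionRing K[X] E]
    [Algebra E F] [IsScalarTower K[X] E F] [FiniteDimensional E F] :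
    Module.rank K (integralClosure K[X] F ⧸ LinearMap.range (LinearMap.mulLeft K
      (algebraMap K[X] (integralClosure K[X] F) Polynomial.X))) ≤ (Module.finrank E F : ℕ) := by
  have hinj : Function.Injective (algebraMap K[X] F) := by
    rw [IsScalarTower.algebraMap_eq K[X] E F]
    exact (algebraMap E F).injective.comp (IsFractionRing.injective K[X] E)
  refine rank_le fun s hs => ?_
  choose b hb using fun i : s => Submodule.mkQ_surjective _ i.1
  have hli : LinearIndependent K[X] b := by
    refine linearIndependent_of_forall_dvd Polynomial.X
      (eq_zero_of_forall_pow_dvd Polynomial.not_isUnit_X) (fun x hx => ?_) b ?_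
    · rw [Algebra.smul_def, mul_eq_zero] at hx
      refine hx.resolve_left fun h => Polynomial.X_ne_zero (hinj ?_)
      rw [map_zero]
      exact congrArg Subtype.val h
    · rintro g ⟨x, hx⟩ i
      rw [Polynomial.X_dvd_iff]
      refine Fintype.linearIndependent_iff.mp hs (fun i => (g i).coeff 0) ?_ i
      simp only [← hb, ← map_smul, ← map_sum]
      rw [Submodule.mkQ_apply, Submodule.Quotient.mk_eq_zero]
      refine ⟨x - ∑ i, (g i).divX • b i, ?_⟩
      rw [LinearMap.mulLeft_apply, ← Algebra.smul_def, smul_sub, ← hx, Finset.smul_sum,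
        ← Finset.sum_sub_distrib]
      refine Finset.sum_congr rfl fun i _ => ?_
      rw [smul_smul, ← sub_smul]
      conv_lhs => rw [← Polynomial.divX_mul_X_add (g i)]
      rw [Polynomial.divX_mul_X_add, ← algebraMap_smul K[X] ((g i).coeff 0) (b i)]
      congr 1
      rw [sub_eq_iff_eq_add', mul_comm]
      exact (Polynomial.divX_mul_X_add (g i)).symm
  have h1 : LinearIndependent K[X] (fun i : s => ((b i : integralClosure K[X] F) : F)) :=
    hli.map' (integralClosure K[X] F).val.toLinearMap
      (LinearMap.ker_eq_bot.mpr Subtype.val_injective)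
  simpa using ((LinearIndependent.iff_fractionRing K[X] E).mp h1).fintype_card_le_finrank

end Riemann

theorem exists_map_eq_zero_and_notMem {K V Q L : Type*} [Field K] [AddCommGroup V] [Module K V]
    [AddCommGroup Q] [Module K Q] [AddCommGroup L] [Module K L] [FiniteDimensional K V]
    [FiniteDimensional K Q] (T : V →ₗ[K] Q) (Ψ : V →ₗ[K] L) (S : Submodule K L)
    [FiniteDimensional K S] (hinj : ∀ w, T w = 0 → Ψ w = 0 → w = 0)
    (hlt : Module.finrank K Q + Module.finrank K S < Module.finrank K V) :
    ∃ w, T w = 0 ∧ Ψ w ∉ S := by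
  by_contra! hall
  have hmap : (LinearMap.ker T).map Ψ ≤ S := by
    rintro _ ⟨w, hw, rfl⟩
    exact hall w hw
  have hdisj : Function.Injective (Ψ.domRestrict (LinearMap.ker T)) := by
    refine (injective_iff_map_eq_zero _).mpr ?_
    rintro ⟨w, hw⟩ h0
    exact Subtype.ext (hinj w hw h0)
  have h1 := Submodule.finrank_mono hmap
  rw [← LinearMap.range_domRestrict, LinearMap.finrank_range_of_inj hdisj] at h1
  have h2 := LinearMap.finrank_range_add_finrank_ker T
  have h3 := (LinearMap.range T).finrank_le
  omega

section Riemann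

variable {K F : Type*} [Field K] [Field F] [Algebra K F]

/-- A function without poles is constant, if there is a rational point. -/
theorem exists_algebraMap_eq_of_forall_mem {O₀ : ValuationSubring F}
    (hK : ∀ c : K, algebraMap K F c ∈ O₀)
    (hres : ∀ f ∈ O₀, ∃ c : K, O₀.valuation (f - algebraMap K F c) < 1) {f : F}
    (hf : ∀ O : ValuationSubring F, (∀ c : K, algebraMap K F c ∈ O) → f ∈ O) :
    ∃ c : K, algebraMap K F c = f := by
  have hint : IsIntegral K f := by
    have hmem :
        f ∈ (integralClosure (Subring.closure (Set.range (algebraMap K F))) F).toSubring := by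
      rw [← iInf_valuationSubring_superset, Subring.mem_iInf]
      rintro ⟨V, hV⟩
      exact hf V fun c => hV ⟨c, rfl⟩
    obtain ⟨P, hP, hPf⟩ : IsIntegral (Subring.closure (Set.range (algebraMap K F))) f := hmem
    have hlift : P.map (algebraMap _ F) ∈ Polynomial.lifts (algebraMap K F) := by
      rw [Polynomial.lifts_iff_coeff_lifts]
      intro i
      rw [Polynomial.coeff_map]
      have hle : Subring.closure (Set.range (algebraMap K F)) ≤ (algebraMap K F).range :=
        Subring.closure_le.mpr (RingHom.coe_range _).ge
      exact hle (P.coeff i).2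
    obtain ⟨Q, hQ, -, hQm⟩ := Polynomial.lifts_and_natDegree_eq_and_monic hlift (hP.map _)
    exact ⟨Q, hQm, by rw [← Polynomial.eval_map, hQ, Polynomial.eval_map, hPf]⟩
  obtain ⟨c, hc⟩ := hres f (hf O₀ hK)
  refine ⟨c, ?_⟩
  by_contra hne
  have hz : f - algebraMap K F c ≠ 0 := sub_ne_zero.mpr (Ne.symm hne)
  exact O₀.inv_notMem_iff.mpr ⟨hz, hc⟩
    (O₀.mem_of_isIntegral hK (hint.sub isIntegral_algebraMap).inv)

variable [Algebra K[X] F] [IsScalarTower K K[X] F]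

/-- Consequence of Riemann's inequality: there is a function whose only pole is a given
rational point. -/
theorem exists_forall_mem_iff_ne (E : Type*) [Field E] [Algebra K[X] E] [IsFractionRing K[X] E]
    [Algebra E F] [IsScalarTower K[X] E F] [FiniteDimensional E F] {O₀ : ValuationSubring F}
    (hK₀ : ∀ c : K, algebraMap K F c ∈ O₀)
    (hres : ∀ f ∈ O₀, ∃ c : K, O₀.valuation (f - algebraMap K F c) < 1)
    (hu : O₀.valuation (algebraMap K[X] F Polynomial.X) < 1) :
    ∃ v : F, ∀ O : ValuationSubring F, (∀ c : K, algebraMap K F c ∈ O) → (v ∈ O ↔ O ≠ O₀) := by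
  have hinj : Function.Injective (algebraMap K[X] F) := by
    rw [IsScalarTower.algebraMap_eq K[X] E F]
    exact (algebraMap E F).injective.comp (IsFractionRing.injective K[X] E)
  let B := integralClosure K[X] F
  have hded : IsDedekindDomain B := isDedekindDomain_integralClosure K[X] E F
  have hfrac : IsFractionRing B F := integralClosure.isFractionRing_of_finite_extension E F
  set u := algebraMap K[X] F Polynomial.X with hudef
  have hu0 : u ≠ 0 := fun h => Polynomial.X_ne_zero (hinj (by rw [← hudef, h, map_zero]))
  let uB : B := algebraMap K[X] B Polynomial.X
  have huB0 : uB ≠ 0 := fun h => hu0 (congrArg Subtype.val h)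
  have hBmem : ∀ O : ValuationSubring F, (∀ c : K, algebraMap K F c ∈ O) → u ∈ O →
      ∀ b : B, algebraMap B F b ∈ O := fun O hK huO b =>
    O.mem_of_isIntegral
      (fun r : K[X] => by rw [algebraMap_eq_aeval_X]; exact O.aeval_mem hK huO r) b.2
  have hB₀ := hBmem O₀ hK₀ ((O₀.valuation_le_one_iff u).mp hu.le)
  obtain ⟨h, hh1, hh⟩ := O₀.exists_separating hB₀ huB0 hu
  -- an integral basis
  obtain ⟨s, b, hb⟩ := FiniteDimensional.exists_is_basis_integral K[X] E F
  let ε : s → B := fun i => ⟨b i, hb i⟩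
  have hε : LinearIndependent K[X] ε := by
    have : LinearIndependent K[X] (B.val.toLinearMap ∘ ε) :=
      (LinearIndependent.iff_fractionRing K[X] E).mpr b.linearIndependent
    exact this.of_comp _
  set n := Module.finrank E F with hn
  have hcard : Fintype.card s = n := (Module.finrank_eq_card_basis b).symm
  obtain ⟨c, hc⟩ : ∃ c : ℕ, ∀ i : s, ∀ O : ValuationSubring F,
      (∀ c : K, algebraMap K F c ∈ O) → u⁻¹ ∈ O → u⁻¹ ^ c * b i ∈ O := by
    choose k hk using fun i : s => exists_inv_pow_mul_mem_of_isIntegral hinj (hb i)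
    refine ⟨Finset.univ.sup k, fun i O hK huO => ?_⟩
    rw [← Nat.sub_add_cancel (Finset.le_sup (f := k) (Finset.mem_univ i)), pow_add, mul_assoc]
    exact MulMemClass.mul_mem (pow_mem huO _) (hk i O hK huO)
  -- the dimension count
  let M := n * c + 2
  let m := M + c
  let φ := LinearMap.mulLeft K uB
  have hrank := rank_quotient_range_pow_le φ (rank_quotient_mulLeft_X_le (K := K) (F := F) E) m
  have hfinQ : FiniteDimensional K (B ⧸ LinearMap.range (φ ^ m)) :=
    Module.rank_lt_aleph0_iff.mp (hrank.trans_lt Cardinal.natCast_lt_aleph0)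
  have hfinrank : Module.finrank K (B ⧸ LinearMap.range (φ ^ m)) ≤ m * n :=
    Module.finrank_le_of_rank_le hrank
  have hφ : ∀ w : B, w ∈ LinearMap.range (φ ^ m) → ∃ w' : B, (w : F) = u ^ m * w' := by
    rintro _ ⟨w', rfl⟩
    exact ⟨w', by rw [LinearMap.pow_mulLeft]; rfl⟩
  let D₁ := Polynomial.degreeLT K M
  let D₂ := Polynomial.degreeLT K m
  have : FiniteDimensional K D₁ := (Polynomial.degreeLTEquiv K M).symm.finiteDimensional
  have : FiniteDimensional K D₂ := (Polynomial.degreeLTEquiv K m).symm.finiteDimensional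
  let Φ₁ : (s → D₁) →ₗ[K] B := ∑ i, ((LinearMap.toSpanSingleton K[X] B
    ((Polynomial.X : K[X]) • ε i)).restrictScalars K) ∘ₗ D₁.subtype ∘ₗ LinearMap.proj i
  have hΦ₁ : ∀ p, Φ₁ p = ∑ i, ((p i : K[X]) * Polynomial.X) • ε i := fun p => by
    simp [Φ₁, LinearMap.sum_apply, mul_smul]
  let Φ₂ : D₂ →ₗ[K] B :=
    ((LinearMap.toSpanSingleton K[X] B (h ^ m)).restrictScalars K) ∘ₗ D₂.subtype
  have hΦ₂ : ∀ r, ((Φ₂ r : B) : F) = Polynomial.aeval u (r : K[X]) * (h : F) ^ m := fun r => by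
    rw [← algebraMap_eq_aeval_X]
    simp [Φ₂, Algebra.smul_def]
  let T := (LinearMap.range (φ ^ m)).mkQ ∘ₗ Φ₁.coprod Φ₂
  have hT : ∀ w, T w = 0 → ∃ w' : B, (Φ₁ w.1 : F) + Φ₂ w.2 = u ^ m * w' := by
    intro w hw
    apply hφ (Φ₁ w.1 + Φ₂ w.2)
    rw [← Submodule.Quotient.mk_eq_zero]
    exact hw
  let Ψ := LinearMap.mulLeft K (u⁻¹ ^ m) ∘ₗ (B.val.toLinearMap.restrictScalars K) ∘ₗ Φ₁ ∘ₗ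
    LinearMap.fst K (s → D₁) D₂
  have hΨ : ∀ w, Ψ w = u⁻¹ ^ m * (Φ₁ w.1 : F) := fun w => rfl
  have hΨinj : ∀ w, T w = 0 → Ψ w = 0 → w = 0 := by
    rintro ⟨p, r⟩ hw h0
    rw [hΨ, mul_eq_zero] at h0
    have hp0 : Φ₁ p = 0 := Subtype.ext (h0.resolve_left (pow_ne_zero _ (inv_ne_zero hu0)))
    have hp : p = 0 := by
      funext i
      have := Fintype.linearIndependent_iff.mp hε _ ((hΦ₁ p).symm.trans hp0) i
      exact Subtype.ext ((mul_eq_zero.mp this).resolve_right Polynomial.X_ne_zero)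
    have hr : r = 0 := by
      obtain ⟨w', hw'⟩ := hT _ hw
      simp only [hp0, ZeroMemClass.coe_zero, zero_add, hΦ₂] at hw'
      have hmem : Polynomial.aeval u (r : K[X]) / u ^ m ∈ O₀ := by
        rw [← O₀.valuation_le_one_iff]
        have hv := congrArg O₀.valuation hw'
        have hh1' : O₀.valuation (h : F) = 1 := hh1
        rw [map_mul, map_pow, hh1', one_pow, mul_one, map_mul] at hv
        rw [map_div₀, hv, mul_div_cancel_left₀ _ ((map_ne_zero _).mpr (pow_ne_zero m hu0)),
          O₀.valuation_le_one_iff]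
        exact hB₀ w'
      have hdvd := O₀.X_pow_dvd_of_aeval_div_mem hK₀ hu0 hu m r hmem
      refine Subtype.ext (Polynomial.eq_zero_of_dvd_of_degree_lt hdvd ?_)
      rw [Polynomial.degree_X_pow]
      exact Polynomial.mem_degreeLT.mp r.2
    rw [hp, hr]
    rfl
  have hlt : Module.finrank K (B ⧸ LinearMap.range (φ ^ m)) +
      Module.finrank K (Submodule.span K {(1 : F)}) < Module.finrank K ((s → D₁) × D₂) := by
    rw [Module.finrank_prod, Module.finrank_pi_fintype,
      (Polynomial.degreeLTEquiv K M).finrank_eq, (Polynomial.degreeLTEquiv K m).finrank_eq,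
      finrank_span_singleton one_ne_zero]
    simp only [Module.finrank_fin_fun, Finset.sum_const, Finset.card_univ, hcard, smul_eq_mul]
    have h3 : m * n + 2 ≤ n * M + m := by
      simp only [m, M]
      nlinarith
    omega
  obtain ⟨w, hwT, hw⟩ := exists_map_eq_zero_and_notMem T Ψ _ hΨinj hlt
  have hreg : ∀ O : ValuationSubring F, (∀ c : K, algebraMap K F c ∈ O) → O ≠ O₀ → Ψ w ∈ O := by
    intro O hK hO
    by_cases hy : u⁻¹ ∈ O
    · have hsum : Ψ w = ∑ i, (Polynomial.aeval u (w.1 i : K[X]) * u⁻¹ ^ (M - 1)) *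
          (u⁻¹ ^ c * b i) := by
        have hcoe : (Φ₁ w.1 : F) = ∑ i, (Polynomial.aeval u (w.1 i : K[X]) * u) * b i := by
          rw [hΦ₁, AddSubmonoidClass.coe_finsetSum]
          refine Finset.sum_congr rfl fun i _ => ?_
          rw [hudef, ← algebraMap_eq_aeval_X, ← map_mul, ← Algebra.smul_def]
          rfl
        rw [hΨ, hcoe, Finset.mul_sum]
        refine Finset.sum_congr rfl fun i _ => ?_
        have hm : u⁻¹ ^ m = u⁻¹ ^ (M - 1) * u⁻¹ * u⁻¹ ^ c := by
          rw [← pow_succ, ← pow_add]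
          rfl
        rw [hm]
        field_simp
      rw [hsum]
      refine sum_mem fun i _ => MulMemClass.mul_mem (O.aeval_mul_inv_pow_mem hK hu0 hy ?_)
        (hc i O hK hy)
      rcases eq_or_ne (w.1 i : K[X]) 0 with h0 | h0
      · simp [h0]
      · exact Nat.le_pred_of_lt ((Polynomial.natDegree_lt_iff_degree_lt h0).mpr
          (Polynomial.mem_degreeLT.mp (w.1 i).2))
    · have huO : u ∈ O := (O.valuation_le_one_iff u).mp (O.inv_notMem_iff.mp hy).2.le
      have hB := hBmem O hK huO
      obtain ⟨w', hw'⟩ := hT w hwT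
      rw [hΦ₂] at hw'
      have : Ψ w = (w' : F) - Polynomial.aeval u (w.2 : K[X]) * ((h : F) / u) ^ m := by
        rw [hΨ, eq_sub_of_add_eq hw', inv_pow, div_pow, mul_sub,
          inv_mul_cancel_left₀ (pow_ne_zero m hu0)]
        ring
      rw [this]
      exact sub_mem (hB w') (MulMemClass.mul_mem (O.aeval_mem hK huO _) (pow_mem (hh O hB hO) m))
  refine ⟨Ψ w, fun O hK => ⟨?_, hreg O hK⟩⟩
  rintro hmem rfl
  obtain ⟨a, ha⟩ := exists_algebraMap_eq_of_forall_mem hK₀ hres (f := Ψ w) fun O' hK' => by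
    by_cases hO : O' = O
    · exact hO ▸ hmem
    · exact hreg O' hK' hO
  refine hw (Submodule.mem_span_singleton.mpr ⟨a, ?_⟩)
  rw [← ha, Algebra.algebraMap_eq_smul_one]

end Riemann

open IntermediateField in
theorem exists_forall_mem_iff_ne_of_transcendental {K F : Type*} [Field K] [Field F] [Algebra K F]
    {u : F} (hu : Transcendental K u) [FiniteDimensional K⟮u⟯ F] {O₀ : ValuationSubring F}
    (hK₀ : ∀ c : K, algebraMap K F c ∈ O₀)
    (hres : ∀ f ∈ O₀, ∃ c : K, O₀.valuation (f - algebraMap K F c) < 1)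
    (hu₀ : O₀.valuation u < 1) :
    ∃ v : F, ∀ O : ValuationSubring F, (∀ c : K, algebraMap K F c ∈ O) → (v ∈ O ↔ O ≠ O₀) := by
  let _ : Algebra K[X] F := (Polynomial.aeval u).toAlgebra
  let _ : Algebra K[X] K⟮u⟯ := (Polynomial.aeval (AdjoinSimple.gen K u)).toAlgebra
  have hF : ∀ p : K[X], algebraMap K[X] F p = Polynomial.aeval u p := fun _ => rfl
  have hE : ∀ p : K[X], ((algebraMap K[X] K⟮u⟯ p : K⟮u⟯) : F) = Polynomial.aeval u p := fun p =>
    AdjoinSimple.coe_aeval_gen_apply K u p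
  have : IsScalarTower K[X] K⟮u⟯ F := IsScalarTower.of_algebraMap_eq fun p => (hE p).symm
  have : IsScalarTower K K[X] F := IsScalarTower.of_algebraMap_eq fun c => by
    rw [hF, Polynomial.algebraMap_apply, Polynomial.aeval_C, Algebra.algebraMap_self_apply]
  have hinj : Function.Injective (algebraMap K[X] F) := transcendental_iff_injective.mp hu
  have : FaithfulSMul K[X] K⟮u⟯ := by
    rw [faithfulSMul_iff_algebraMap_injective]
    intro p q hpq
    exact hinj (by rw [hF, hF, ← hE, ← hE, hpq])
  have : IsFractionRing K[X] K⟮u⟯ := IsFractionRing.of_field _ _ fun z => by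
    obtain ⟨r, s, hz⟩ := (mem_adjoin_simple_iff K (z : F)).mp z.2
    refine ⟨r, s, Subtype.ext ?_⟩
    rw [hz, ← hE, ← hE]
    rfl
  refine exists_forall_mem_iff_ne K⟮u⟯ hK₀ hres ?_
  rwa [hF, Polynomial.aeval_X]

open IntermediateField in
theorem exists_adjoin_eq_and_valuation_lt_one {K F : Type*} [Field K] [Field F] [Algebra K F]
    {t : F} (ht : Transcendental K t) {O₀ : ValuationSubring F}
    (hres : ∀ f ∈ O₀, ∃ c : K, O₀.valuation (f - algebraMap K F c) < 1) :
    ∃ u : F, Transcendental K u ∧ K⟮u⟯ = K⟮t⟯ ∧ O₀.valuation u < 1 := by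
  have key : ∀ s : F, Transcendental K s → s ∈ O₀ →
      ∃ u : F, Transcendental K u ∧ K⟮u⟯ = K⟮s⟯ ∧ O₀.valuation u < 1 := by
    intro s hs hsO
    obtain ⟨c, hc⟩ := hres s hsO
    refine ⟨s - algebraMap K F c, fun h => hs ?_, le_antisymm ?_ ?_, hc⟩
    · simpa using h.add (isAlgebraic_algebraMap c)
    · rw [adjoin_simple_le_iff]
      exact sub_mem (mem_adjoin_simple_self K s) (IntermediateField.algebraMap_mem _ c)
    · rw [adjoin_simple_le_iff]
      simpa using add_mem (mem_adjoin_simple_self K (s - algebraMap K F c))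
        (IntermediateField.algebraMap_mem _ c)
  rcases O₀.mem_or_inv_mem t with h | h
  · exact key t ht h
  · obtain ⟨u, hu, hut, hv⟩ := key t⁻¹ (fun h => ht (by simpa using h.inv)) h
    refine ⟨u, hu, hut.trans (le_antisymm ?_ ?_), hv⟩
    · rw [adjoin_simple_le_iff]
      exact inv_mem (mem_adjoin_simple_self K t)
    · rw [adjoin_simple_le_iff]
      simpa using inv_mem (mem_adjoin_simple_self K t⁻¹)

/-- Existence of a "good cover": let `F` be the function field of a smooth projective curve
`S'` over a field `K` (a finitely generated extension of transcendence degree `1`), let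
`O₀` be the place (valuation subring) of `F/K` corresponding to a `K`-rational point
`s₀ ∈ S'(K)`, and let `x ∈ F`. Then there is a finite cover `C' → S'` (a finite extension
`F'` of `F`) and a function `x' ∈ F'` whose zero divisor is supported exactly on the
preimages of `s₀`: `x'` vanishes at a place of `F'/K̄∩F'` if and only if that place lies
over `O₀`. -/
theorem exists_good_cover (K F : Type) [Field K] [Field F] [Algebra K F]
    (t : F) (htr : Transcendental K t)
    (hfd : FiniteDimensional (↥(IntermediateField.adjoin K {t})) F)
    (x : F) (hx : x ≠ 0)
    (O₀ : ValuationSubring F) (hK : ∀ c : K, algebraMap K F c ∈ O₀) (htop : O₀ ≠ ⊤)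
    -- `s₀` is a `K`-rational point: the residue field of `O₀` is `K`
    (hres : ∀ f ∈ O₀, ∃ c : K, f - algebraMap K F c = 0 ∨
      (f - algebraMap K F c ∈ O₀ ∧ (f - algebraMap K F c)⁻¹ ∉ O₀)) :
    ∃ F' : IntermediateField F (AlgebraicClosure F), FiniteDimensional F ↥F' ∧
      ∃ x' : ↥F', x' ≠ 0 ∧
        ∀ O' : ValuationSubring ↥F',
          (∀ c : K, algebraMap K ↥F' c ∈ O') → O' ≠ ⊤ →
            ((x' ∈ O' ∧ x'⁻¹ ∉ O') ↔ O'.comap (algebraMap F ↥F') = O₀) := by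
  have hres' : ∀ f ∈ O₀, ∃ c : K, O₀.valuation (f - algebraMap K F c) < 1 := by
    intro f hf
    obtain ⟨c, h | ⟨-, h⟩⟩ := hres f hf
    · exact ⟨c, by simp [h]⟩
    · exact ⟨c, (O₀.inv_notMem_iff.mp h).2⟩
  obtain ⟨u, hu, hut, hv⟩ := exists_adjoin_eq_and_valuation_lt_one htr hres'
  rw [← hut] at hfd
  obtain ⟨v, hpole⟩ := exists_forall_mem_iff_ne_of_transcendental hu hK hres' hv
  have hv₀ : v ∉ O₀ := fun h => (hpole O₀ hK).mp h rfl
  have hv0 : v ≠ 0 := fun h => hv₀ (h ▸ O₀.zero_mem)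
  have hsurj : Function.Surjective
      (algebraMap F (⊥ : IntermediateField F (AlgebraicClosure F))) := fun z => by
    obtain ⟨y, hy⟩ := IntermediateField.mem_bot.mp z.2
    exact ⟨y, Subtype.ext hy⟩
  refine ⟨⊥, inferInstance, algebraMap F _ v⁻¹, ?_, fun O' hK' _ => ?_⟩
  · simpa using hv0
  · set O := O'.comap (algebraMap F (⊥ : IntermediateField F (AlgebraicClosure F))) with hO
    have hKO : ∀ c : K, algebraMap K F c ∈ O := fun c => by
      rw [hO, ValuationSubring.mem_comap, ← IsScalarTower.algebraMap_apply]
      exact hK' c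
    rw [← map_inv₀, inv_inv, ← ValuationSubring.mem_comap, ← ValuationSubring.mem_comap, ← hO,
      hpole O hKO, not_not]
    refine ⟨fun h => h.2, fun h => ⟨(O.mem_or_inv_mem v).resolve_left ?_, h⟩⟩
    rwa [h]

end
end
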